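/- Let p ≥ 1 be an integer, u ∈ (−1/2, 1/2), and let f : ℝ → ℝ be continuous. Define Z_p[f] as the integral of ∏_{i=1}^p (sin αᵢ / sin βᵢ)^{2u} · f(βᵢ−αᵢ) over the region {0 < α₁ < β₁ < α₂ < β₂ < ⋯ < α_p < β_p < π} with respect to 2p-dimensional Lebesgue measure dα₁dβ₁⋯dα_pdβ_p. Then Z_p[f] = ∫_S (sinc(2uθ₀)/sinc(2πu)) · (θ₀^p/p!) · [∏_{i=1}^{p−1} f(θᵢ)] · f(π − θ₀ − θ₁ − ⋯ − θ_{p−1}) dθ₀dθ₁⋯dθ_{p−1}, where S = {(θ₀,…,θ_{p−1}) ∈ ℝ^p : each θᵢ > 0 and θ₀ + ⋯ + θ_{p−1} < π}. -/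

import Mathlib

open Real MeasureTheory

/-- `sinc x = sin x / x` for `x ≠ 0` and `sinc 0 = 1`. -/
noncomputable def sinc (x : ℝ) : ℝ := if x = 0 then 1 else Real.sin x / x

/-!
Glue the ends of `[0, π]` and read `0 < α₁ < β₁ < ⋯ < β_p < π` as `p` disjoint arcs of lengths
`θᵢ = βᵢ - αᵢ` on the circle `ℝ / πℤ`, together with a marked origin in the gap between the last arc
and the first. Rotating the origin to `t`, the weight `∏ (sin (αᵢ - t) / sin (βᵢ - t)) ^ (2u)` is,
up to a phase, the boundary value of `∏ ((1 - z e^{-2iαᵢ}) / (1 - z e^{-2iβᵢ})) ^ (2u)`, which is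
holomorphic in the disc with value `1` at `0`. The phase takes one value on the arcs and another
off the arcs, so the mean value property determines the integral of the weight over all the gaps:
it is `θ₀ sinc (2uθ₀) / sinc (2πu)`, where `θ₀ = π - ∑ θᵢ` is the total length of the gaps.

Renaming the arcs cyclically moves the origin from one gap to the next and preserves both
`∏ f(θᵢ)` and Lebesgue measure on the gap lengths, so each gap carries a `p`-th part of the total.
The gap vectors form a simplex of volume `θ₀^(p-1) / (p-1)!`, whence the factor `θ₀^p / p!`.
-/

open Set Filter Function
open scoped Topology

section LocallyIntegrable

variable {X : Type*} [TopologicalSpace X] [SecondCountableTopology X] [MeasurableSpace X]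
  [OpensMeasurableSpace X] {μ : Measure X}

theorem locallyIntegrable_mul_of_continuousAt_or {f g : X → ℝ}
    (hf : LocallyIntegrable f μ) (hg : LocallyIntegrable g μ)
    (hfg : ∀ x, ContinuousAt f x ∨ ContinuousAt g x) :
    LocallyIntegrable (fun x => f x * g x) μ := by
  intro x
  have hmeas : StronglyMeasurableAtFilter (fun x => f x * g x) (𝓝 x) μ :=
    (hf.aestronglyMeasurable.mul hg.aestronglyMeasurable).stronglyMeasurableAtFilter
  rcases hfg x with hfx | hgx
  · have hbound : (fun y => f y * g y) =O[𝓝 x] g := by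
      simpa using (hfx.isBigO_one ℝ).mul (Asymptotics.isBigO_refl g (𝓝 x))
    exact hbound.integrableAtFilter hmeas (hg x)
  · have hbound : (fun y => f y * g y) =O[𝓝 x] f := by
      simpa using (Asymptotics.isBigO_refl f (𝓝 x)).mul (hgx.isBigO_one ℝ)
    exact hbound.integrableAtFilter hmeas (hf x)

theorem locallyIntegrable_prod_of_pairwise_continuousAt_or [IsLocallyFiniteMeasure μ]
    {ι : Type*} (s : Finset ι) {f : ι → X → ℝ} (hf : ∀ i ∈ s, LocallyIntegrable (f i) μ)
    (hcont : ∀ x, (s : Set ι).Pairwise fun i j => ContinuousAt (f i) x ∨ ContinuousAt (f j) x) :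
    LocallyIntegrable (fun x => ∏ i ∈ s, f i x) μ := by
  classical
  induction s using Finset.induction_on with
  | empty => simpa using locallyIntegrable_const (1 : ℝ)
  | insert a s ha ih =>
    simp only [Finset.prod_insert ha]
    have hs : (s : Set ι) ⊆ (insert a s : Finset ι) := by simp
    refine locallyIntegrable_mul_of_continuousAt_or (hf a (Finset.mem_insert_self a s))
      (ih (fun i hi => hf i (hs hi)) fun x => (hcont x).mono hs) fun x => ?_
    by_cases hax : ContinuousAt (f a) x
    · exact Or.inl hax
    · refine Or.inr (tendsto_finsetProd s fun j hj => ?_)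
      exact (hcont x (Finset.mem_insert_self a s) (hs hj)
        (ne_of_mem_of_not_mem hj ha).symm).resolve_left hax

end LocallyIntegrable

section SinPower

theorem locallyIntegrable_abs_sub_rpow {e : ℝ} (he : -1 < e) (c : ℝ) :
    LocallyIntegrable fun t : ℝ => |t - c| ^ e := by
  have hzero : LocallyIntegrable fun t : ℝ => |t| ^ e :=
    locallyIntegrable_of_norm_le_rpow (C := 1) (α := -e) (by simp) (by simpa using by linarith)
      (by filter_upwards with t; simp [abs_of_nonneg (rpow_nonneg (abs_nonneg t) e)])
      (measurable_id.abs.pow_const e).aestronglyMeasurable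
  have htranslate := locallyIntegrable_map_homeomorph (Homeomorph.subRight c) (μ := volume)
    (f := fun t : ℝ => |t| ^ e)
  rw [Homeomorph.coe_subRight, map_sub_right_eq_self] at htranslate
  exact htranslate.1 hzero

theorem abs_sin_eq_abs_sub_mul_abs_sinc {x : ℝ} (hx : Real.sin x = 0) (t : ℝ) :
    |Real.sin t| = |t - x| * |Real.sinc (t - x)| := by
  have hcos : |Real.cos x| = 1 := by
    rcases Real.sin_eq_zero_iff_cos_eq.1 hx with h | h <;> simp [h]
  have hsin : Real.sin t = Real.sin (t - x) * Real.cos x := by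
    simpa [hx] using Real.sin_add (t - x) x
  rw [hsin, abs_mul, hcos, mul_one, ← abs_mul]
  rcases eq_or_ne (t - x) 0 with h | h
  · simp [h]
  · rw [Real.sinc_of_ne_zero h, mul_div_cancel₀ _ h]

theorem continuousAt_abs_sin_sub_rpow {c t : ℝ} (h : Real.sin (t - c) ≠ 0) (e : ℝ) :
    ContinuousAt (fun t => |Real.sin (t - c)| ^ e) t :=
  ContinuousAt.rpow_const (by fun_prop) (Or.inl (abs_ne_zero.2 h))

theorem locallyIntegrable_abs_sin_sub_rpow {e : ℝ} (he : -1 < e) (c : ℝ) :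
    LocallyIntegrable fun t : ℝ => |Real.sin (t - c)| ^ e := by
  intro x
  have hmeas : StronglyMeasurableAtFilter (fun t : ℝ => |Real.sin (t - c)| ^ e) (𝓝 x) :=
    (Measurable.aestronglyMeasurable (by fun_prop)).stronglyMeasurableAtFilter
  by_cases hx : Real.sin (x - c) = 0
  · have hsinc : ContinuousAt (fun t => |Real.sinc (t - x)| ^ e) x :=
      ContinuousAt.rpow_const (by fun_prop) (Or.inl (by simp))
    have hbound : (fun t => |Real.sin (t - c)| ^ e) =O[𝓝 x] fun t => |t - x| ^ e := by
      simpa [abs_sin_eq_abs_sub_mul_abs_sinc hx, mul_rpow] using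
        (Asymptotics.isBigO_refl (fun t => |t - x| ^ e) (𝓝 x)).mul (hsinc.isBigO_one ℝ)
    exact hbound.integrableAtFilter hmeas (locallyIntegrable_abs_sub_rpow he x x)
  · exact ((continuousAt_abs_sin_sub_rpow hx e).isBigO_one ℝ).integrableAtFilter hmeas
      (locallyIntegrable_const (1 : ℝ) x)

end SinPower

section BranchProduct

open Complex in
theorem one_sub_circleMap_two_mul (s : ℝ) :
    1 - circleMap 0 1 (2 * s) = (2 * Real.sin s : ℝ) * cexp ((s - π / 2 : ℝ) * I) := by
  have hsq : cexp ((2 * s : ℝ) * I) = cexp (s * I) * cexp (s * I) := by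
    rw [← Complex.exp_add]; push_cast; ring_nf
  have hquarter : cexp ((s - π / 2 : ℝ) * I) = cexp (s * I) * -I := by
    have hneg : cexp (-(π / 2 * I)) = -I := by rw [Complex.exp_neg, exp_pi_div_two_mul_I, inv_I]
    rw [← hneg, ← Complex.exp_add]; push_cast; ring_nf
  rw [circleMap_zero, hsq, hquarter, exp_mul_I]
  push_cast
  linear_combination (-1 : ℂ) * Complex.sin_sq_add_cos_sq (s : ℂ) + Complex.sin s ^ 2 * I_sq

theorem norm_one_sub_circleMap_two_mul (s : ℝ) :
    ‖1 - circleMap 0 1 (2 * s)‖ = 2 * |Real.sin s| := by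
  rw [one_sub_circleMap_two_mul, norm_mul, Complex.norm_exp_ofReal_mul_I, mul_one,
    Complex.norm_real, norm_mul, Real.norm_two, Real.norm_eq_abs]

theorem circleMap_two_mul_ne_one {s : ℝ} (hs : Real.sin s ≠ 0) : circleMap 0 1 (2 * s) ≠ 1 := by
  intro h
  have hnorm := norm_one_sub_circleMap_two_mul s
  rw [h, sub_self, norm_zero] at hnorm
  exact hs (abs_eq_zero.1 (by linarith))

theorem arg_one_sub_circleMap_of_pos {s : ℝ} (h0 : 0 < s) (hπ : s < π) :
    Complex.arg (1 - circleMap 0 1 (2 * s)) = s - π / 2 := by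
  rw [one_sub_circleMap_two_mul, Complex.exp_mul_I, ← Complex.ofReal_cos, ← Complex.ofReal_sin,
    Complex.ofReal_cos, Complex.ofReal_sin]
  exact Complex.arg_mul_cos_add_sin_mul_I (mul_pos two_pos (sin_pos_of_pos_of_lt_pi h0 hπ))
    ⟨by linarith, by linarith⟩

theorem arg_one_sub_circleMap_of_neg {s : ℝ} (h0 : s < 0) (hπ : -π < s) :
    Complex.arg (1 - circleMap 0 1 (2 * s)) = s + π / 2 := by
  have hper : circleMap 0 1 (2 * (s + π)) = circleMap 0 1 (2 * s) := by
    rw [mul_add, periodic_circleMap 0 1 (2 * s)]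
  rw [← hper, arg_one_sub_circleMap_of_pos (by linarith) (by linarith)]
  ring

theorem one_sub_mem_slitPlane {w : ℂ} (hw : ‖w‖ ≤ 1) (hw1 : w ≠ 1) :
    1 - w ∈ Complex.slitPlane := by
  rw [Complex.mem_slitPlane_iff_not_le_zero]
  intro hle
  obtain ⟨hre, him⟩ := Complex.le_def.1 hle
  simp only [Complex.sub_re, Complex.one_re, Complex.zero_re, Complex.sub_im, Complex.one_im,
    Complex.zero_im, zero_sub, neg_eq_zero] at hre him
  exact hw1 (Complex.ext (le_antisymm ((Complex.re_le_norm w).trans hw) (by simpa using hre))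
    (by simpa using him))

theorem norm_one_sub_circleMap_le_two {r : ℝ} (h0 : 0 ≤ r) (h1 : r ≤ 1) (θ : ℝ) :
    ‖1 - circleMap 0 r θ‖ ≤ 2 :=
  calc ‖1 - circleMap 0 r θ‖ ≤ ‖(1 : ℂ)‖ + ‖circleMap 0 r θ‖ := norm_sub_le _ _
    _ ≤ 2 := by rw [norm_one, norm_circleMap_zero, abs_of_nonneg h0]; linarith

theorem norm_one_sub_circleMap_one_le {r : ℝ} (h0 : 0 ≤ r) (h1 : r ≤ 1) (θ : ℝ) :
    ‖1 - circleMap 0 1 θ‖ ≤ 2 * ‖1 - circleMap 0 r θ‖ := by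
  have hdist : ‖circleMap 0 r θ - circleMap 0 1 θ‖ = 1 - r := by
    have hsub : circleMap 0 r θ - circleMap 0 1 θ = circleMap 0 (r - 1) θ := by
      simp only [circleMap_zero]; push_cast; ring
    rw [hsub, norm_circleMap_zero, abs_of_nonpos (by linarith), neg_sub]
  have hradial : 1 - r ≤ ‖1 - circleMap 0 r θ‖ := by
    simpa [abs_of_nonneg h0] using norm_sub_norm_le (1 : ℂ) (circleMap 0 r θ)
  linarith [norm_sub_le_norm_sub_add_norm_sub 1 (circleMap 0 r θ) (circleMap 0 1 θ)]

variable {ι : Type*} [Fintype ι]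

/-- The product `∏ₖ (1 - z e^{-2icₖ}) ^ eₖ` of principal powers: holomorphic in the unit disc, equal
to `1` at the origin, with branch points `e^{2icₖ}` on the unit circle. The angles are doubled so
that the circle is traversed once as the parameter runs over an interval of length `π`. -/
noncomputable def branchProduct (c e : ι → ℝ) (z : ℂ) : ℂ :=
  ∏ k, (1 - z * circleMap 0 1 (-(2 * c k))) ^ (e k : ℂ)

variable (c e : ι → ℝ)

theorem branchProduct_circleMap (r t : ℝ) :
    branchProduct c e (circleMap 0 r (2 * t)) =
      ∏ k, (1 - circleMap 0 r (2 * (t - c k))) ^ (e k : ℂ) := by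
  simp only [branchProduct, circleMap_zero_mul, mul_one, ← sub_eq_add_neg, ← mul_sub]

theorem differentiableAt_branchProduct {z : ℂ} (hz : ‖z‖ ≤ 1)
    (hzc : ∀ k, z * circleMap 0 1 (-(2 * c k)) ≠ 1) :
    DifferentiableAt ℂ (branchProduct c e) z := by
  refine DifferentiableAt.fun_finsetProd fun k _ =>
    DifferentiableAt.cpow_const (by fun_prop) (one_sub_mem_slitPlane ?_ (hzc k))
  simpa using hz

theorem measurable_branchProduct : Measurable (branchProduct c e) := by
  unfold branchProduct
  fun_prop

theorem integral_branchProduct_circleMap {r : ℝ} (h0 : 0 ≤ r) (h1 : r < 1) :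
    ∫ t in (0 : ℝ)..π, branchProduct c e (circleMap 0 r (2 * t)) = π := by
  have hdiff : DiffContOnCl ℂ (branchProduct c e) (Metric.ball 0 |r|) := by
    refine DifferentiableOn.diffContOnCl fun z hz => ?_
    have hz1 : ‖z‖ < 1 := by
      have hball := Metric.closure_ball_subset_closedBall hz
      rw [mem_closedBall_zero_iff, abs_of_nonneg h0] at hball
      exact hball.trans_lt h1
    refine (differentiableAt_branchProduct c e hz1.le fun k hk => ?_).differentiableWithinAt
    have hnorm := congrArg norm hk
    rw [norm_mul, norm_circleMap_zero, abs_one, mul_one, norm_one] at hnorm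
    exact hz1.ne hnorm
  have hmean := hdiff.circleAverage
  rw [circleAverage_def, inv_smul_eq_iff₀ (by positivity)] at hmean
  have hsubst := intervalIntegral.integral_comp_mul_left (a := 0) (b := π)
    (fun θ => branchProduct c e (circleMap 0 r θ)) (c := 2) two_ne_zero
  rw [hsubst, mul_zero, hmean, smul_smul, inv_mul_cancel_left₀ two_ne_zero]
  simp [branchProduct]

theorem norm_cpow_one_sub_circleMap_le {r s : ℝ} (h0 : 0 ≤ r) (h1 : r ≤ 1)
    (hs : Real.sin s ≠ 0) (x : ℝ) :
    ‖(1 - circleMap 0 r (2 * s)) ^ (x : ℂ)‖ ≤ 2 ^ x + |Real.sin s| ^ x := by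
  rw [Complex.norm_cpow_real]
  have hlower : |Real.sin s| ≤ ‖1 - circleMap 0 r (2 * s)‖ := by
    linarith [norm_one_sub_circleMap_one_le h0 h1 (2 * s), norm_one_sub_circleMap_two_mul s]
  rcases le_or_gt 0 x with hx | hx
  · have hupper := rpow_le_rpow (norm_nonneg _) (norm_one_sub_circleMap_le_two h0 h1 (2 * s)) hx
    linarith [rpow_nonneg (abs_nonneg (Real.sin s)) x]
  · have hanti := rpow_le_rpow_of_nonpos (abs_pos.2 hs) hlower hx.le
    linarith [rpow_nonneg zero_le_two x]

theorem norm_branchProduct_circleMap_le {r t : ℝ} (h0 : 0 ≤ r) (h1 : r ≤ 1)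
    (ht : ∀ k, Real.sin (t - c k) ≠ 0) :
    ‖branchProduct c e (circleMap 0 r (2 * t))‖ ≤
      ∏ k, (2 ^ e k + |Real.sin (t - c k)| ^ e k) := by
  rw [branchProduct_circleMap, norm_prod]
  exact Finset.prod_le_prod (fun _ _ => norm_nonneg _) fun k _ =>
    norm_cpow_one_sub_circleMap_le h0 h1 (ht k) (e k)

theorem ae_sin_sub_ne_zero (x : ℝ) : ∀ᵐ t : ℝ, Real.sin (t - x) ≠ 0 := by
  have hzeros : {t : ℝ | Real.sin (t - x) = 0}.Countable := by
    refine (countable_range fun n : ℤ => n * π + x).mono fun t ht => ?_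
    obtain ⟨n, hn⟩ := Real.sin_eq_zero_iff.1 ht
    exact ⟨n, by simp [hn]⟩
  exact hzeros.ae_notMem volume

variable {c e}

theorem intervalIntegrable_prod_two_rpow_add_abs_sin_rpow
    (hc : Pairwise fun i j => Real.sin (c i - c j) ≠ 0) (he : ∀ k, -1 < e k) (x y : ℝ) :
    IntervalIntegrable (fun t => ∏ k, ((2 : ℝ) ^ e k + |Real.sin (t - c k)| ^ e k))
      volume x y := by
  suffices h : LocallyIntegrable fun t => ∏ k, ((2 : ℝ) ^ e k + |Real.sin (t - c k)| ^ e k) from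
    (h.integrableOn_isCompact isCompact_uIcc).intervalIntegrable
  refine locallyIntegrable_prod_of_pairwise_continuousAt_or _ (fun k _ =>
    (locallyIntegrable_const _).add (locallyIntegrable_abs_sin_sub_rpow (he k) (c k)))
    fun t i _ j _ hij => ?_
  have hcont : ∀ k, Real.sin (t - c k) ≠ 0 →
      ContinuousAt (fun t => (2 : ℝ) ^ e k + |Real.sin (t - c k)| ^ e k) t := fun k hk =>
    continuousAt_const.add (continuousAt_abs_sin_sub_rpow hk (e k))
  refine (em (Real.sin (t - c i) = 0)).elim (fun hi => Or.inr (hcont j fun hj => ?_))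
    fun hi => Or.inl (hcont i hi)
  refine hc hij ?_
  rw [← sub_sub_sub_cancel_left (c j) (c i) t, Real.sin_sub, hi, hj, zero_mul, mul_zero, sub_zero]

theorem continuousAt_branchProduct_circleMap {t : ℝ} (ht : ∀ k, Real.sin (t - c k) ≠ 0) :
    ContinuousAt (fun r : ℝ => branchProduct c e (circleMap 0 r (2 * t))) 1 := by
  refine ContinuousAt.comp (g := branchProduct c e)
    (differentiableAt_branchProduct c e (by simp) fun k => ?_).continuousAt ?_
  · simpa only [circleMap_zero_mul, mul_one, ← sub_eq_add_neg, ← mul_sub] using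
      circleMap_two_mul_ne_one (ht k)
  · simp only [circleMap_zero]
    fun_prop

theorem intervalIntegrable_branchProduct_circleMap
    (hc : Pairwise fun i j => Real.sin (c i - c j) ≠ 0) (he : ∀ k, -1 < e k) (x y : ℝ) :
    IntervalIntegrable (fun t => branchProduct c e (circleMap 0 1 (2 * t))) volume x y := by
  have hmeas : Measurable fun t => branchProduct c e (circleMap 0 1 (2 * t)) :=
    (measurable_branchProduct c e).comp (by fun_prop)
  refine (intervalIntegrable_prod_two_rpow_add_abs_sin_rpow hc he x y).mono_fun'
    hmeas.aestronglyMeasurable (ae_restrict_of_ae ?_)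
  filter_upwards [ae_all_iff.2 fun k => ae_sin_sub_ne_zero (c k)] with t ht
  exact norm_branchProduct_circleMap_le c e zero_le_one le_rfl ht

theorem integral_branchProduct_unitCircle
    (hc : Pairwise fun i j => Real.sin (c i - c j) ≠ 0) (he : ∀ k, -1 < e k) :
    ∫ t in (0 : ℝ)..π, branchProduct c e (circleMap 0 1 (2 * t)) = π := by
  have hsin := ae_all_iff.2 fun k => ae_sin_sub_ne_zero (c k)
  have hradii : ∀ᶠ r : ℝ in 𝓝[<] 1, r ∈ Ioo 0 1 := Ioo_mem_nhdsLT zero_lt_one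
  have hlim : Tendsto (fun r => ∫ t in (0 : ℝ)..π, branchProduct c e (circleMap 0 r (2 * t)))
      (𝓝[<] 1) (𝓝 (∫ t in (0 : ℝ)..π, branchProduct c e (circleMap 0 1 (2 * t)))) := by
    refine intervalIntegral.tendsto_integral_filter_of_dominated_convergence _ ?_ ?_
      (intervalIntegrable_prod_two_rpow_add_abs_sin_rpow hc he 0 π) ?_
    · exact .of_forall fun r =>
        ((measurable_branchProduct c e).comp (by fun_prop)).aestronglyMeasurable
    · filter_upwards [hradii] with r hr
      filter_upwards [hsin] with t ht _
      exact norm_branchProduct_circleMap_le c e hr.1.le hr.2.le ht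
    · filter_upwards [hsin] with t ht _
      exact (continuousAt_branchProduct_circleMap ht).tendsto.mono_left nhdsWithin_le_nhds
  refine tendsto_nhds_unique hlim (tendsto_const_nhds.congr' ?_)
  filter_upwards [hradii] with r hr
  exact (integral_branchProduct_circleMap c e hr.1.le hr.2).symm

end BranchProduct

section ArcWeight

variable {ι : Type*} {a b : ι → ℝ} {u t : ℝ}

/-- The closed arcs `[aⱼ, bⱼ]` are nondegenerate and pairwise disjoint in the fundamental domain
`[0, π)` of `ℝ / πℤ`. -/
structure IsArcSystem (a b : ι → ℝ) : Prop where
  nonneg : ∀ j, 0 ≤ a j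
  lt : ∀ j, a j < b j
  lt_pi : ∀ j, b j < π
  disjoint : Pairwise fun i j => b i < a j ∨ b j < a i

theorem sin_sub_ne_zero_of_ne {x y : ℝ} (hx : x ∈ Ico 0 π) (hy : y ∈ Ico 0 π) (hxy : x ≠ y) :
    Real.sin (x - y) ≠ 0 := by
  rw [Ne, sin_eq_zero_iff_of_lt_of_lt (by linarith [hx.1, hy.2]) (by linarith [hx.2, hy.1])]
  exact sub_ne_zero.2 hxy

namespace IsArcSystem

theorem left_mem (h : IsArcSystem a b) (j : ι) : a j ∈ Ico 0 π :=
  ⟨h.nonneg j, (h.lt j).trans (h.lt_pi j)⟩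

theorem right_mem (h : IsArcSystem a b) (j : ι) : b j ∈ Ico 0 π :=
  ⟨(h.nonneg j).trans (h.lt j).le, h.lt_pi j⟩

theorem pairwise_sin_endpoints_ne_zero (h : IsArcSystem a b) :
    Pairwise fun k l : ι ⊕ ι => Real.sin (Sum.elim a b k - Sum.elim a b l) ≠ 0 := by
  have hmem : ∀ k : ι ⊕ ι, Sum.elim a b k ∈ Ico 0 π := by
    rintro (j | j)
    exacts [h.left_mem j, h.right_mem j]
  have hinj : Injective (Sum.elim a b) := by
    refine Injective.sumElim (fun i j hij => ?_) (fun i j hij => ?_) fun i j hij => ?_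
    all_goals by_contra hne
    · rcases h.disjoint hne with hd | hd <;> linarith [h.lt i, h.lt j]
    · rcases h.disjoint hne with hd | hd <;> linarith [h.lt i, h.lt j]
    · rcases eq_or_ne i j with rfl | hne
      · linarith [h.lt i]
      · rcases h.disjoint hne with hd | hd <;> linarith [h.lt i, h.lt j]
  exact fun k l hkl => sin_sub_ne_zero_of_ne (hmem k) (hmem l) (hinj.ne hkl)

theorem pairwise_disjoint_Ioc (h : IsArcSystem a b) :
    Pairwise (Disjoint on fun j => Ioc (a j) (b j)) := by
  intro i j hij
  rw [onFun, Ioc_disjoint_Ioc]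
  rcases h.disjoint hij with hd | hd
  · exact (min_le_left _ _).trans (hd.le.trans (le_max_right _ _))
  · exact (min_le_right _ _).trans (hd.le.trans (le_max_left _ _))

theorem iUnion_Ioc_subset (h : IsArcSystem a b) : ⋃ j, Ioc (a j) (b j) ⊆ Ioc 0 π :=
  iUnion_subset fun j => Ioc_subset_Ioc (h.nonneg j) (h.lt_pi j).le

end IsArcSystem

theorem cpow_one_sub_mul_cpow_neg_one_sub (s s' x : ℝ) :
    (1 - circleMap 0 1 (2 * s)) ^ (x : ℂ) * (1 - circleMap 0 1 (2 * s')) ^ ((-x : ℝ) : ℂ) =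
      ((|Real.sin s| / |Real.sin s'|) ^ x : ℝ) *
        Complex.exp ((x * (Complex.arg (1 - circleMap 0 1 (2 * s)) -
          Complex.arg (1 - circleMap 0 1 (2 * s'))) : ℝ) * Complex.I) := by
  have hmod : (|Real.sin s| / |Real.sin s'|) ^ x =
      ‖1 - circleMap 0 1 (2 * s)‖ ^ x * ‖1 - circleMap 0 1 (2 * s')‖ ^ (-x) := by
    rw [norm_one_sub_circleMap_two_mul, norm_one_sub_circleMap_two_mul,
      rpow_neg (by positivity), ← div_eq_mul_inv, ← div_rpow (by positivity) (by positivity),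
      mul_div_mul_left _ _ two_ne_zero]
  simp only [Complex.cpow_ofReal, Complex.ofReal_cos, Complex.ofReal_sin, ← Complex.exp_mul_I,
    hmod, Complex.ofReal_mul]
  rw [mul_mul_mul_comm, ← Complex.exp_add]
  push_cast
  ring_nf

theorem arg_one_sub_circleMap_sub_arg (ht : t ∈ Ioo 0 π) {x y : ℝ} (hx : 0 ≤ x) (hxy : x < y)
    (hy : y < π) (htx : t ≠ x) (hty : t ≠ y) :
    Complex.arg (1 - circleMap 0 1 (2 * (t - x))) - Complex.arg (1 - circleMap 0 1 (2 * (t - y))) =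
      y - x - (Ioc x y).indicator (fun _ => π) t := by
  obtain ⟨ht0, htπ⟩ := ht
  rcases lt_or_gt_of_ne htx with h | hxt
  · rw [arg_one_sub_circleMap_of_neg (by linarith) (by linarith),
      arg_one_sub_circleMap_of_neg (by linarith) (by linarith),
      indicator_of_notMem fun hmem => h.not_gt hmem.1]
    ring
  rw [arg_one_sub_circleMap_of_pos (by linarith) (by linarith)]
  rcases lt_or_gt_of_ne hty with h | h
  · rw [arg_one_sub_circleMap_of_neg (by linarith) (by linarith),
      indicator_of_mem (mem_Ioc.2 ⟨hxt, h.le⟩)]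
    ring
  · rw [arg_one_sub_circleMap_of_pos (by linarith) (by linarith),
      indicator_of_notMem fun hmem => h.not_ge hmem.2]
    ring

variable [Fintype ι]

/-- The weight `∏ⱼ (sin (aⱼ - t) / sin (bⱼ - t)) ^ (2u)` of arcs `(aⱼ, bⱼ)` of the circle `ℝ / πℤ`
seen from the origin `t`. The absolute values make it well defined on the circle. -/
noncomputable def arcWeight (u : ℝ) (a b : ι → ℝ) (t : ℝ) : ℝ :=
  ∏ j, (|Real.sin (t - a j)| / |Real.sin (t - b j)|) ^ (2 * u)

theorem arcWeight_nonneg (u : ℝ) (a b : ι → ℝ) (t : ℝ) : 0 ≤ arcWeight u a b t :=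
  Finset.prod_nonneg fun _ _ => by positivity

/-- The holomorphic function `∏ⱼ ((1 - z e^{-2iaⱼ}) / (1 - z e^{-2ibⱼ})) ^ (2u)`, whose modulus on
the unit circle is `arcWeight u a b`. -/
noncomputable def arcBranchProduct (u : ℝ) (a b : ι → ℝ) : ℂ → ℂ :=
  branchProduct (Sum.elim a b) (Sum.elim (fun _ => 2 * u) fun _ => -(2 * u))

theorem IsArcSystem.arcBranchProduct_circleMap (h : IsArcSystem a b) (ht : t ∈ Ioo 0 π)
    (hta : ∀ j, t ≠ a j) (htb : ∀ j, t ≠ b j) :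
    arcBranchProduct u a b (circleMap 0 1 (2 * t)) = arcWeight u a b t *
      Complex.exp ((2 * u * (∑ j, (b j - a j) -
        (⋃ j, Ioc (a j) (b j)).indicator (fun _ => π) t) : ℝ) * Complex.I) := by
  have hind : (⋃ j, Ioc (a j) (b j)).indicator (fun _ => π) t =
      ∑ j, (Ioc (a j) (b j)).indicator (fun _ => π) t := by
    rw [indicator_iUnion_of_pairwise_disjoint _ h.pairwise_disjoint_Ioc]
    exact tsum_fintype _
  rw [hind, ← Finset.sum_sub_distrib, arcBranchProduct, branchProduct_circleMap,
    Fintype.prod_sum_type, ← Finset.prod_mul_distrib]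
  simp only [Sum.elim_inl, Sum.elim_inr, cpow_one_sub_mul_cpow_neg_one_sub]
  rw [Finset.prod_mul_distrib, ← Complex.exp_sum, ← Complex.ofReal_prod, ← Finset.sum_mul,
    ← Complex.ofReal_sum, ← Finset.mul_sum]
  simp only [arg_one_sub_circleMap_sub_arg ht (h.nonneg _) (h.lt _) (h.lt_pi _) (hta _) (htb _)]
  rfl

theorem IsArcSystem.ae_arcBranchProduct_circleMap (h : IsArcSystem a b) (u : ℝ) :
    ∀ᵐ t ∂volume.restrict (Ioc 0 π), arcBranchProduct u a b (circleMap 0 1 (2 * t)) =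
      arcWeight u a b t * Complex.exp ((2 * u * (∑ j, (b j - a j) -
        (⋃ j, Ioc (a j) (b j)).indicator (fun _ => π) t) : ℝ) * Complex.I) := by
  filter_upwards [ae_restrict_mem measurableSet_Ioc,
    ae_restrict_of_ae (volume.ae_ne π),
    ae_restrict_of_ae (ae_all_iff.2 fun j => volume.ae_ne (a j)),
    ae_restrict_of_ae (ae_all_iff.2 fun j => volume.ae_ne (b j))] with t ht htπ hta htb
  exact h.arcBranchProduct_circleMap ⟨ht.1, lt_of_le_of_ne ht.2 htπ⟩ hta htb

theorem IsArcSystem.integrableOn_arcBranchProduct (h : IsArcSystem a b)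
    (hu : u ∈ Ioo (-(1 / 2)) (1 / 2)) :
    IntegrableOn (fun t => arcBranchProduct u a b (circleMap 0 1 (2 * t))) (Ioc 0 π) := by
  rw [← intervalIntegrable_iff_integrableOn_Ioc_of_le pi_pos.le]
  refine intervalIntegrable_branchProduct_circleMap h.pairwise_sin_endpoints_ne_zero ?_ 0 π
  rintro (j | j)
  exacts [by simpa using by linarith [hu.1], by simpa using by linarith [hu.2]]

theorem IsArcSystem.setIntegral_arcBranchProduct (h : IsArcSystem a b)
    (hu : u ∈ Ioo (-(1 / 2)) (1 / 2)) :
    ∫ t in Ioc 0 π, arcBranchProduct u a b (circleMap 0 1 (2 * t)) = π := by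
  rw [← intervalIntegral.integral_of_le pi_pos.le]
  refine integral_branchProduct_unitCircle h.pairwise_sin_endpoints_ne_zero ?_
  rintro (j | j)
  exacts [by simpa using by linarith [hu.1], by simpa using by linarith [hu.2]]

theorem IsArcSystem.integrableOn_arcWeight (h : IsArcSystem a b)
    (hu : u ∈ Ioo (-(1 / 2)) (1 / 2)) : IntegrableOn (arcWeight u a b) (Ioc 0 π) := by
  refine (h.integrableOn_arcBranchProduct hu).norm.congr ?_
  filter_upwards [h.ae_arcBranchProduct_circleMap u] with t ht
  rw [ht, norm_mul, Complex.norm_exp_ofReal_mul_I, mul_one, Complex.norm_real,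
    norm_of_nonneg (arcWeight_nonneg u a b t)]

/- The phase of `arcBranchProduct` is constant on the arcs and constant off the arcs; rotating it
to be real on the arcs, only the complement contributes to the imaginary part of the mean value. -/
theorem IsArcSystem.sin_mul_integral_arcWeight (h : IsArcSystem a b)
    (hu : u ∈ Ioo (-(1 / 2)) (1 / 2)) :
    Real.sin (2 * π * u) * ∫ t in Ioc 0 π \ ⋃ j, Ioc (a j) (b j), arcWeight u a b t =
      π * Real.sin (2 * u * (π - ∑ j, (b j - a j))) := by
  have hae := h.ae_arcBranchProduct_circleMap u
  set Θ := ∑ j, (b j - a j)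
  set A := ⋃ j, Ioc (a j) (b j)
  have hA : MeasurableSet A := .iUnion fun j => measurableSet_Ioc
  set ω := Complex.exp ((2 * u * (π - Θ) : ℝ) * Complex.I) with hω
  have him : ∀ᵐ t ∂volume.restrict (Ioc 0 π),
      (arcBranchProduct u a b (circleMap 0 1 (2 * t)) * ω).im =
        Aᶜ.indicator (fun t => Real.sin (2 * π * u) * arcWeight u a b t) t := by
    filter_upwards [hae] with t ht
    rw [ht, mul_assoc, ← Complex.exp_add, ← add_mul, ← Complex.ofReal_add, Complex.im_ofReal_mul,
      Complex.exp_ofReal_mul_I_im]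
    by_cases htA : t ∈ A
    · rw [indicator_of_mem htA, indicator_of_notMem (notMem_compl_iff.2 htA)]
      ring_nf
      simp
    · rw [indicator_of_notMem htA, indicator_of_mem (mem_compl htA), mul_comm]
      ring_nf
  calc Real.sin (2 * π * u) * ∫ t in Ioc 0 π \ A, arcWeight u a b t
      = ∫ t in Ioc 0 π, Aᶜ.indicator (fun t => Real.sin (2 * π * u) * arcWeight u a b t) t := by
        rw [setIntegral_indicator hA.compl, integral_const_mul, sdiff_eq]
    _ = ∫ t in Ioc 0 π, (arcBranchProduct u a b (circleMap 0 1 (2 * t)) * ω).im :=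
        (integral_congr_ae him).symm
    _ = (∫ t in Ioc 0 π, arcBranchProduct u a b (circleMap 0 1 (2 * t)) * ω).im :=
        integral_im ((h.integrableOn_arcBranchProduct hu).mul_const ω)
    _ = π * Real.sin (2 * u * (π - Θ)) := by
        rw [integral_mul_const, h.setIntegral_arcBranchProduct hu, Complex.im_ofReal_mul, hω,
          Complex.exp_ofReal_mul_I_im]

theorem IsArcSystem.volume_real_diff_iUnion (h : IsArcSystem a b) :
    volume.real (Ioc 0 π \ ⋃ j, Ioc (a j) (b j)) = π - ∑ j, (b j - a j) := by
  have harcs : volume.real (⋃ j, Ioc (a j) (b j)) = ∑ j, (b j - a j) := by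
    rw [measureReal_iUnion_fintype h.pairwise_disjoint_Ioc (fun j => measurableSet_Ioc)
      fun j => measure_Ioc_lt_top.ne]
    exact Finset.sum_congr rfl fun j _ => volume_real_Ioc_of_le (h.lt j).le
  rw [measureReal_sdiff h.iUnion_Ioc_subset (.iUnion fun j => measurableSet_Ioc)
    measure_Ioc_lt_top.ne, harcs, volume_real_Ioc_of_le pi_pos.le, sub_zero]

theorem sin_eq_mul_sinc (x : ℝ) : Real.sin x = x * Real.sinc x := by
  rcases eq_or_ne x 0 with rfl | hx
  · simp
  · rw [Real.sinc_of_ne_zero hx, mul_div_cancel₀ _ hx]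

theorem sinc_pos {x : ℝ} (hx : |x| < π) : 0 < Real.sinc x := by
  rcases eq_or_ne x 0 with rfl | h0
  · simp
  have habs : Real.sinc x = Real.sin |x| / |x| := by
    rcases abs_choice x with h | h <;> rw [h]
    · exact Real.sinc_of_ne_zero h0
    · rw [← Real.sinc_neg, Real.sinc_of_ne_zero (neg_ne_zero.2 h0)]
  rw [habs]
  exact div_pos (sin_pos_of_pos_of_lt_pi (abs_pos.2 h0) hx) (abs_pos.2 h0)

theorem sinc_two_mul_pi_mul_pos (hu : u ∈ Ioo (-(1 / 2)) (1 / 2)) :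
    0 < Real.sinc (2 * π * u) := by
  refine sinc_pos ?_
  rw [abs_mul, abs_of_pos two_pi_pos]
  nlinarith [abs_lt.2 hu, pi_pos]

theorem IsArcSystem.integral_arcWeight (h : IsArcSystem a b)
    (hu : u ∈ Ioo (-(1 / 2)) (1 / 2)) :
    ∫ t in Ioc 0 π \ ⋃ j, Ioc (a j) (b j), arcWeight u a b t =
      (π - ∑ j, (b j - a j)) *
        (Real.sinc (2 * u * (π - ∑ j, (b j - a j))) / Real.sinc (2 * π * u)) := by
  rcases eq_or_ne u 0 with rfl | hu0
  · simpa [arcWeight] using h.volume_real_diff_iUnion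
  have hsin := h.sin_mul_integral_arcWeight hu
  rw [sin_eq_mul_sinc, sin_eq_mul_sinc (2 * u * _)] at hsin
  have hpos := sinc_two_mul_pi_mul_pos hu
  rw [← mul_div_assoc, eq_div_iff hpos.ne']
  refine mul_left_cancel₀ (mul_ne_zero two_pi_pos.ne' hu0) ?_
  linear_combination hsin

end ArcWeight

section Simplex

variable {n : ℕ} {L : ℝ}

/-- The cyclic shift `(z₀, …, zₙ) ↦ (z₁, …, zₙ, z₀)`. -/
def cyclicShift (z : Fin (n + 1) → ℝ) (i : Fin (n + 1)) : ℝ := z (i + 1)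

theorem sum_cyclicShift (z : Fin (n + 1) → ℝ) : ∑ i, cyclicShift z i = ∑ i, z i :=
  Equiv.sum_comp (Equiv.addRight 1) z

theorem prod_comp_cyclicShift (g : ℝ → ℝ) (z : Fin (n + 1) → ℝ) :
    ∏ i, g (cyclicShift z i) = ∏ i, g (z i) :=
  Equiv.prod_comp (Equiv.addRight 1) fun i => g (z i)

theorem forall_cyclicShift_pos {z : Fin (n + 1) → ℝ} :
    (∀ i, 0 < cyclicShift z i) ↔ ∀ i, 0 < z i :=
  (Equiv.addRight (1 : Fin (n + 1))).forall_congr_left (p := fun i => 0 < z (i + 1)) |>.trans <| by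
    simp

theorem measurePreserving_cyclicShift :
    MeasurePreserving (cyclicShift : (Fin (n + 1) → ℝ) → Fin (n + 1) → ℝ) := by
  have heq : (cyclicShift : (Fin (n + 1) → ℝ) → Fin (n + 1) → ℝ) =
      MeasurableEquiv.piCongrLeft (fun _ => ℝ) (Equiv.addRight (1 : Fin (n + 1))).symm := by
    funext z i
    rw [cyclicShift, ← MeasurableEquiv.piCongrLeft_apply_apply (β := fun _ : Fin (n + 1) => ℝ)
      (Equiv.addRight (1 : Fin (n + 1))).symm z (i + 1)]
    simp
  rw [heq]
  exact volume_measurePreserving_piCongrLeft (fun _ => ℝ) _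

/-- The open corner simplex `{y ∈ ℝⁿ : yᵢ > 0, y₁ + ⋯ + yₙ < L}`. -/
def openSimplex (n : ℕ) (L : ℝ) : Set (Fin n → ℝ) := {y | (∀ i, 0 < y i) ∧ ∑ i, y i < L}

theorem measurableSet_openSimplex (n : ℕ) (L : ℝ) : MeasurableSet (openSimplex n L) := by
  unfold openSimplex
  measurability

theorem openSimplex_eq_empty (hL : L ≤ 0) : openSimplex n L = ∅ :=
  eq_empty_of_forall_notMem fun _ hy =>
    (Finset.sum_nonneg fun i _ => (hy.1 i).le).not_gt (hy.2.trans_le hL)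

theorem preimage_cyclicShift_openSimplex :
    cyclicShift ⁻¹' openSimplex (n + 1) L = openSimplex (n + 1) L := by
  ext z
  simp only [openSimplex, mem_preimage, mem_ofPred_eq, forall_cyclicShift_pos, sum_cyclicShift]

theorem cons_mem_openSimplex {s : ℝ} {y : Fin n → ℝ} :
    Fin.cons s y ∈ openSimplex (n + 1) L ↔ 0 < s ∧ y ∈ openSimplex n (L - s) := by
  simp only [openSimplex, mem_ofPred_eq, Fin.forall_fin_succ, Fin.cons_zero, Fin.cons_succ,
    Fin.sum_univ_succ, lt_sub_iff_add_lt', and_assoc]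

theorem measurePreserving_cons :
    MeasurePreserving (fun q : ℝ × (Fin n → ℝ) => (Fin.cons q.1 q.2 : Fin (n + 1) → ℝ)) := by
  convert (volume_preserving_piFinSuccAbove (fun _ : Fin (n + 1) => ℝ) 0).symm using 2 with q
  exact (Fin.insertNth_zero (α := fun _ => ℝ) q.1 q.2).symm

theorem measurePreserving_head_tail :
    MeasurePreserving (fun y : Fin (n + 1) → ℝ => (y 0, Fin.tail y)) :=
  volume_preserving_piFinSuccAbove (fun _ : Fin (n + 1) => ℝ) 0

theorem lintegral_Ioo_ofReal_sub_pow_div_factorial (n : ℕ) (hL : 0 ≤ L) :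
    ∫⁻ s in Ioo 0 L, ENNReal.ofReal ((L - s) ^ n / n.factorial) =
      ENNReal.ofReal (L ^ (n + 1) / (n + 1).factorial) := by
  rw [← ofReal_integral_eq_lintegral_ofReal]
  · rw [← integral_Ioc_eq_integral_Ioo, ← intervalIntegral.integral_of_le hL,
      intervalIntegral.integral_comp_sub_left (fun x : ℝ => x ^ n / n.factorial) L,
      intervalIntegral.integral_div, integral_pow, Nat.factorial_succ]
    congr 1
    push_cast
    field_simp
    simp
  · exact (Continuous.integrableOn_Ioc (by fun_prop)).mono_set Ioo_subset_Ioc_self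
  · filter_upwards [ae_restrict_mem measurableSet_Ioo] with s hs
    exact div_nonneg (pow_nonneg (sub_nonneg.2 hs.2.le) n) (Nat.cast_nonneg _)

theorem volume_openSimplex (n : ℕ) :
    ∀ {L : ℝ}, 0 < L → volume (openSimplex n L) = ENNReal.ofReal (L ^ n / n.factorial) := by
  induction n with
  | zero =>
    intro L hL
    have huniv : openSimplex 0 L = univ := by ext; simp [openSimplex, hL]
    simp [huniv, volume_pi]
  | succ n ih =>
    intro L hL
    have hsection : ∀ s, volume (Prod.mk s ⁻¹' ((fun q : ℝ × (Fin n → ℝ) =>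
        (Fin.cons q.1 q.2 : Fin (n + 1) → ℝ)) ⁻¹' openSimplex (n + 1) L)) =
        (Ioo 0 L).indicator (fun s => ENNReal.ofReal ((L - s) ^ n / n.factorial)) s := by
      intro s
      simp only [preimage, cons_mem_openSimplex, mem_ofPred_eq]
      by_cases hs0 : 0 < s
      · simp only [hs0, true_and, ofPred_mem_eq]
        by_cases hsL : s < L
        · rw [indicator_of_mem (mem_Ioo.2 ⟨hs0, hsL⟩), ih (sub_pos.2 hsL)]
        · rw [indicator_of_notMem fun h => hsL h.2,
            openSimplex_eq_empty (sub_nonpos.2 (not_lt.1 hsL)), measure_empty]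
      · simp [hs0]
    rw [← measurePreserving_cons.measure_preimage (measurableSet_openSimplex _ _).nullMeasurableSet,
      Measure.volume_eq_prod, Measure.prod_apply
        (measurePreserving_cons.measurable (measurableSet_openSimplex _ _))]
    simp only [hsection]
    rw [lintegral_indicator measurableSet_Ioo, lintegral_Ioo_ofReal_sub_pow_div_factorial n hL.le]

theorem measurePreserving_cons_sub_sum_tail (L : ℝ) :
    MeasurePreserving fun y : Fin (n + 1) → ℝ =>
      (Fin.cons (L - ∑ i, y i) (Fin.tail y) : Fin (n + 1) → ℝ) := by
  have hreflect : MeasurePreserving fun q : (Fin n → ℝ) × ℝ => (q.1, (L - ∑ i, q.1 i) - q.2) :=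
    (MeasurePreserving.id volume).skew_product (g := fun (v : Fin n → ℝ) s => (L - ∑ i, v i) - s)
      (by simp only [uncurry_def]; fun_prop)
      (ae_of_all _ fun v => (Measure.measurePreserving_sub_left volume _).map_eq)
  convert measurePreserving_cons.comp (Measure.measurePreserving_swap.comp
    (hreflect.comp (Measure.measurePreserving_swap.comp measurePreserving_head_tail)))
    using 2 with y
  simp only [Fin.sum_univ_succ, comp_apply, Prod.swap_prod_mk, Fin.tail, Fin.cons_inj, and_true]
  ring

theorem cons_sub_sum_tail_mem_openSimplex {y : Fin (n + 1) → ℝ} :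
    Fin.cons (L - ∑ i, y i) (Fin.tail y) ∈ openSimplex (n + 1) L ↔ y ∈ openSimplex (n + 1) L := by
  rw [cons_mem_openSimplex]
  simp only [openSimplex, mem_ofPred_eq, Fin.forall_fin_succ, Fin.tail, Fin.sum_univ_succ]
  constructor
  · rintro ⟨h0, hpos, hlt⟩
    exact ⟨⟨by linarith, hpos⟩, by linarith⟩
  · rintro ⟨⟨h0, hpos⟩, hlt⟩
    exact ⟨by linarith, hpos, by linarith⟩

/-- The point `(y₁, …, yₙ, L - y₁ - ⋯ - yₙ)` of the hyperplane of coordinate sum `L`. -/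
def snocSubSum (L : ℝ) (y : Fin n → ℝ) : Fin (n + 1) → ℝ := Fin.snoc y (L - ∑ i, y i)

theorem snocSubSum_castSucc (L : ℝ) (y : Fin n → ℝ) (i : Fin n) :
    snocSubSum L y i.castSucc = y i :=
  Fin.snoc_castSucc (α := fun _ => ℝ) ..

theorem snocSubSum_last (L : ℝ) (y : Fin n → ℝ) : snocSubSum L y (Fin.last n) = L - ∑ i, y i :=
  Fin.snoc_last (α := fun _ => ℝ) ..

theorem sum_snocSubSum (L : ℝ) (y : Fin n → ℝ) : ∑ i, snocSubSum L y i = L := by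
  simp [Fin.sum_univ_castSucc, snocSubSum_castSucc, snocSubSum_last]

theorem snocSubSum_init (z : Fin (n + 1) → ℝ) : snocSubSum (∑ i, z i) (Fin.init z) = z := by
  rw [snocSubSum, Fin.sum_univ_castSucc]
  simp only [Fin.init, add_sub_cancel_left]
  exact Fin.snoc_init_self z

theorem measurable_uncurry_snocSubSum :
    Measurable (uncurry (snocSubSum : ℝ → (Fin n → ℝ) → Fin (n + 1) → ℝ)) := by
  refine measurable_pi_iff.2 (Fin.lastCases ?_ fun i => ?_)
  · simp only [uncurry_def, snocSubSum_last]
    fun_prop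
  · simp only [uncurry_def, snocSubSum_castSucc]
    fun_prop

theorem measurable_snocSubSum (L : ℝ) :
    Measurable (snocSubSum L : (Fin n → ℝ) → Fin (n + 1) → ℝ) :=
  measurable_uncurry_snocSubSum.comp measurable_prodMk_left

theorem cyclicShift_snocSubSum (L : ℝ) (y : Fin (n + 1) → ℝ) :
    cyclicShift (snocSubSum L y) =
      snocSubSum L (cyclicShift (Fin.cons (L - ∑ i, y i) (Fin.tail y))) := by
  have hinit : Fin.init (cyclicShift (snocSubSum L y)) =
      cyclicShift (Fin.cons (L - ∑ i, y i) (Fin.tail y)) := by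
    funext i
    rw [Fin.init, cyclicShift, cyclicShift, Fin.coeSucc_eq_succ]
    refine Fin.lastCases ?_ (fun i => ?_) i
    · rw [Fin.succ_last, snocSubSum_last, Fin.last_add_one, Fin.cons_zero]
    · rw [Fin.succ_castSucc, snocSubSum_castSucc, Fin.coeSucc_eq_succ, Fin.cons_succ, Fin.tail]
  rw [← hinit]
  conv_lhs => rw [← snocSubSum_init (cyclicShift _), sum_cyclicShift, sum_snocSubSum]

/-- Lebesgue measure on the simplex `{z ∈ ℝⁿ⁺¹ : zᵢ > 0, z₀ + ⋯ + zₙ = L}`, i.e. the measure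
`δ(z₀ + ⋯ + zₙ - L) dz`, obtained by solving for the last coordinate. -/
noncomputable def simplexMeasure (n : ℕ) (L : ℝ) : Measure (Fin (n + 1) → ℝ) :=
  (volume.restrict (openSimplex n L)).map (snocSubSum L)

theorem lintegral_simplexMeasure {g : (Fin (n + 1) → ℝ) → ENNReal} (hg : Measurable g) (L : ℝ) :
    ∫⁻ z, g z ∂simplexMeasure n L = ∫⁻ y in openSimplex n L, g (snocSubSum L y) :=
  lintegral_map hg (measurable_snocSubSum L)

theorem simplexMeasure_univ (hL : 0 < L) :
    simplexMeasure n L univ = ENNReal.ofReal (L ^ n / n.factorial) := by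
  rw [simplexMeasure, Measure.map_apply (measurable_snocSubSum L) .univ, preimage_univ,
    Measure.restrict_apply_univ, volume_openSimplex n hL]

theorem ae_simplexMeasure (n : ℕ) (L : ℝ) :
    ∀ᵐ z ∂simplexMeasure n L, (∀ i, 0 < z i) ∧ ∑ i, z i = L := by
  refine (ae_map_iff (measurable_snocSubSum L).aemeasurable (by measurability)).2 ?_
  filter_upwards [ae_restrict_mem (measurableSet_openSimplex n L)] with y hy
  refine ⟨fun i => ?_, sum_snocSubSum L y⟩
  refine Fin.lastCases ?_ (fun i => ?_) i
  · rw [snocSubSum_last]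
    exact sub_pos.2 hy.2
  · rw [snocSubSum_castSucc]
    exact hy.1 i

theorem measurePreserving_cyclicShift_openSimplex (n : ℕ) (L : ℝ) :
    MeasurePreserving cyclicShift (volume.restrict (openSimplex (n + 1) L))
      (volume.restrict (openSimplex (n + 1) L)) := by
  simpa only [preimage_cyclicShift_openSimplex] using
    measurePreserving_cyclicShift.restrict_preimage (measurableSet_openSimplex (n + 1) L)

theorem measurePreserving_cons_sub_sum_tail_openSimplex (n : ℕ) (L : ℝ) :
    MeasurePreserving (fun y : Fin (n + 1) → ℝ =>
        (Fin.cons (L - ∑ i, y i) (Fin.tail y) : Fin (n + 1) → ℝ))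
      (volume.restrict (openSimplex (n + 1) L)) (volume.restrict (openSimplex (n + 1) L)) := by
  simpa only [preimage, cons_sub_sum_tail_mem_openSimplex, ofPred_mem_eq] using
    (measurePreserving_cons_sub_sum_tail (n := n) L).restrict_preimage
      (measurableSet_openSimplex (n + 1) L)

theorem measurePreserving_cyclicShift_simplexMeasure (n : ℕ) (L : ℝ) :
    MeasurePreserving cyclicShift (simplexMeasure n L) (simplexMeasure n L) := by
  refine ⟨measurePreserving_cyclicShift.measurable, ?_⟩
  cases n with
  | zero =>
    convert Measure.map_id
    funext z i
    rw [cyclicShift, Fin.eq_zero (i + 1), Fin.eq_zero i, id]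
  | succ n =>
    have hshift := (measurePreserving_cyclicShift_openSimplex n L).comp
      (measurePreserving_cons_sub_sum_tail_openSimplex n L)
    calc (simplexMeasure (n + 1) L).map cyclicShift
        = (volume.restrict (openSimplex (n + 1) L)).map (cyclicShift ∘ snocSubSum L) :=
          Measure.map_map measurePreserving_cyclicShift.measurable (measurable_snocSubSum L)
      _ = (volume.restrict (openSimplex (n + 1) L)).map (snocSubSum L ∘
            (cyclicShift ∘ fun y => Fin.cons (L - ∑ i, y i) (Fin.tail y))) := by
          congr 1
          exact funext (cyclicShift_snocSubSum L)
      _ = simplexMeasure (n + 1) L := by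
          rw [← Measure.map_map (measurable_snocSubSum L) hshift.measurable, hshift.map_eq,
            simplexMeasure]

theorem measurable_lintegral_simplexMeasure {α : Type*} [MeasurableSpace α]
    {g : α → (Fin (n + 1) → ℝ) → ENNReal} (hg : Measurable (uncurry g)) {L : α → ℝ}
    (hL : Measurable L) : Measurable fun x => ∫⁻ z, g x z ∂simplexMeasure n (L x) := by
  have hind : ∀ x, ∫⁻ z, g x z ∂simplexMeasure n (L x) = ∫⁻ y : Fin n → ℝ,
      {q : α × (Fin n → ℝ) | q.2 ∈ openSimplex n (L q.1)}.indicator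
        (fun q => g q.1 (snocSubSum (L q.1) q.2)) (x, y) := fun x => by
    rw [lintegral_simplexMeasure hg.of_uncurry_left,
      ← lintegral_indicator (measurableSet_openSimplex n (L x))]
    rfl
  have hset : MeasurableSet {q : α × (Fin n → ℝ) | q.2 ∈ openSimplex n (L q.1)} := by
    unfold openSimplex
    measurability
  simp only [hind]
  refine Measurable.lintegral_prod_right' (Measurable.indicator ?_ hset)
  exact hg.comp (measurable_fst.prodMk
    (measurable_uncurry_snocSubSum.comp ((hL.comp measurable_fst).prodMk measurable_snd)))

end Simplex

section Interlacing

variable {n : ℕ} {L : ℝ}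

theorem measurePreserving_cons_add {g : (Fin n → ℝ) → Fin n → ℝ} (hg : MeasurePreserving g) :
    MeasurePreserving fun q : ℝ × (Fin n → ℝ) =>
      (Fin.cons q.1 fun i => q.1 + g q.2 i : Fin (n + 1) → ℝ) := by
  have hmeas := hg.measurable
  have hskew : MeasurePreserving fun q : ℝ × (Fin n → ℝ) => (q.1, (fun _ => q.1) + g q.2) :=
    (MeasurePreserving.id volume).skew_product (g := fun (s : ℝ) v => (fun _ => s) + g v)
      (by simp only [uncurry_def]; fun_prop)
      (ae_of_all _ fun s => ((measurePreserving_add_left volume fun _ => s).comp hg).map_eq)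
  exact measurePreserving_cons.comp hskew

theorem measurePreserving_partialSum_succ (n : ℕ) :
    MeasurePreserving fun (y : Fin n → ℝ) (i : Fin n) => Fin.partialSum y i.succ := by
  induction n with
  | zero =>
    have hid : (fun (y : Fin 0 → ℝ) (i : Fin 0) => Fin.partialSum y i.succ) = id :=
      funext fun _ => Subsingleton.elim _ _
    rw [hid]
    exact MeasurePreserving.id volume
  | succ n ih =>
    convert (measurePreserving_cons_add ih).comp measurePreserving_head_tail using 2 with y
    funext i
    rw [Fin.partialSum_succ']
    refine Fin.cases ?_ (fun i => ?_) i <;> simp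

theorem measurePreserving_add_partialSum (d : Fin n → ℝ) :
    MeasurePreserving fun (q : ℝ × (Fin n → ℝ)) (i : Fin (n + 1)) =>
      q.1 + Fin.partialSum (d + q.2) i := by
  convert measurePreserving_cons_add
    ((measurePreserving_partialSum_succ n).comp (measurePreserving_add_left volume d)) using 2
    with q
  funext i
  refine Fin.cases ?_ (fun i => ?_) i <;> simp

/-- Left endpoints of consecutive arcs of lengths `θᵢ` separated by gaps of lengths `hᵢ`, laid out
from the origin in the order `θ₀, h₀, θ₁, h₁, …`. -/
def arcLeft (θ h : Fin (n + 1) → ℝ) (i : Fin (n + 1)) : ℝ := Fin.partialSum (θ + h) i.castSucc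

/-- Right endpoints of the arcs of `arcLeft`. -/
def arcRight (θ h : Fin (n + 1) → ℝ) (i : Fin (n + 1)) : ℝ := arcLeft θ h i + θ i

variable {θ h : Fin (n + 1) → ℝ}

theorem arcLeft_zero (θ h : Fin (n + 1) → ℝ) : arcLeft θ h 0 = 0 := Fin.partialSum_zero _

theorem arcRight_add (θ h : Fin (n + 1) → ℝ) (i : Fin (n + 1)) :
    arcRight θ h i + h i = Fin.partialSum (θ + h) i.succ := by
  rw [arcRight, arcLeft, Fin.partialSum_succ, Pi.add_apply, add_assoc]

theorem arcLeft_succ (θ h : Fin (n + 1) → ℝ) (i : Fin n) :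
    arcLeft θ h i.succ = arcRight θ h i.castSucc + h i.castSucc :=
  (arcRight_add θ h i.castSucc).symm

theorem partialSum_last (y : Fin n → ℝ) : Fin.partialSum y (Fin.last n) = ∑ i, y i := by
  simp [Fin.partialSum, List.take_of_length_le, List.sum_ofFn]

theorem arcRight_last_add (θ h : Fin (n + 1) → ℝ) :
    arcRight θ h (Fin.last n) + h (Fin.last n) = ∑ i, θ i + ∑ i, h i := by
  rw [arcRight_add, Fin.succ_last, partialSum_last, ← Finset.sum_add_distrib]
  rfl

theorem measurable_arcLeft (i : Fin (n + 1)) :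
    Measurable fun q : (Fin (n + 1) → ℝ) × (Fin (n + 1) → ℝ) => arcLeft q.1 q.2 i := by
  refine Fin.induction ?_ (fun i hi => ?_) i
  · simp only [arcLeft_zero, measurable_const]
  · simp only [arcLeft_succ, arcRight]
    fun_prop

theorem measurable_arcRight (i : Fin (n + 1)) :
    Measurable fun q : (Fin (n + 1) → ℝ) × (Fin (n + 1) → ℝ) => arcRight q.1 q.2 i := by
  have hleft := measurable_arcLeft i
  simp only [arcRight]
  fun_prop

/-- The endpoints of the arcs of `arcLeft` and `arcRight`, laid out from `s` instead of `0`. -/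
def arcsFrom (θ h : Fin (n + 1) → ℝ) (s : ℝ) : (Fin (n + 1) → ℝ) × (Fin (n + 1) → ℝ) :=
  (fun i => s + arcLeft θ h i, fun i => s + arcRight θ h i)

theorem measurable_arcsFrom :
    Measurable fun q : ((Fin (n + 1) → ℝ) × (Fin (n + 1) → ℝ)) × ℝ => arcsFrom q.1.1 q.1.2 q.2 := by
  have hleft := fun i => measurable_arcLeft (n := n) i
  have hright := fun i => measurable_arcRight (n := n) i
  unfold arcsFrom
  fun_prop

/-- The interlacing pairs `0 < a₀ < b₀ < a₁ < b₁ < ⋯ < aₙ < bₙ < L`. -/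
def interlacingPairs (n : ℕ) (L : ℝ) : Set ((Fin (n + 1) → ℝ) × (Fin (n + 1) → ℝ)) :=
  {q | 0 < q.1 0 ∧ (∀ i, q.1 i < q.2 i) ∧ (∀ i : Fin n, q.2 i.castSucc < q.1 i.succ) ∧
    q.2 (Fin.last n) < L}

theorem measurableSet_interlacingPairs (n : ℕ) (L : ℝ) :
    MeasurableSet (interlacingPairs n L) := by
  unfold interlacingPairs
  measurability

theorem arcsFrom_mem_interlacingPairs {s : ℝ} (hsum : ∑ i, θ i + ∑ i, h i = L) :
    arcsFrom θ h s ∈ interlacingPairs n L ↔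
      (∀ i, 0 < θ i) ∧ (∀ i : Fin n, 0 < h i.castSucc) ∧ s ∈ Ioo 0 (h (Fin.last n)) := by
  have hlast := arcRight_last_add θ h
  have hlast_lt : s + arcRight θ h (Fin.last n) < L ↔ s < h (Fin.last n) := by
    constructor <;> intro <;> linarith
  simp only [interlacingPairs, arcsFrom, mem_ofPred_eq, arcLeft_zero, add_zero, arcLeft_succ,
    hlast_lt, add_lt_add_iff_left, lt_add_iff_pos_right, mem_Ioo]
  simp only [arcRight, lt_add_iff_pos_right]
  tauto

theorem arcsFrom_snocSubSum_mem_interlacingPairs {y : Fin n → ℝ} {s : ℝ} :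
    arcsFrom θ (snocSubSum (L - ∑ i, θ i) y) s ∈ interlacingPairs n L ↔
      θ ∈ openSimplex (n + 1) L ∧ y ∈ openSimplex n (L - ∑ i, θ i) ∧
        s ∈ Ioo 0 (snocSubSum (L - ∑ i, θ i) y (Fin.last n)) := by
  rw [arcsFrom_mem_interlacingPairs (by rw [sum_snocSubSum, add_sub_cancel])]
  simp only [snocSubSum_castSucc, snocSubSum_last, openSimplex, mem_ofPred_eq, mem_Ioo]
  constructor
  · rintro ⟨hθ, hy, hs0, hs⟩
    have hsum_y := Finset.sum_nonneg fun i (_ : i ∈ Finset.univ) => (hy i).le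
    exact ⟨⟨hθ, by linarith⟩, ⟨hy, by linarith⟩, hs0, hs⟩
  · rintro ⟨⟨hθ, -⟩, ⟨hy, -⟩, hs⟩
    exact ⟨hθ, hy, hs⟩

theorem add_partialSum_eq_arcsFrom (L : ℝ) (θ : Fin (n + 1) → ℝ) (y : Fin n → ℝ) (s : ℝ) :
    ((fun i => s + Fin.partialSum (Fin.init θ + y) i,
        (fun i => s + Fin.partialSum (Fin.init θ + y) i) + θ) :
      (Fin (n + 1) → ℝ) × (Fin (n + 1) → ℝ)) = arcsFrom θ (snocSubSum (L - ∑ i, θ i) y) s := by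
  have hinit : Fin.init θ + y = Fin.init (θ + snocSubSum (L - ∑ i, θ i) y) := by
    funext j
    simp [Fin.init, snocSubSum_castSucc]
  simp only [hinit, Fin.partialSum_init]
  ext i
  · rfl
  · exact add_assoc ..

theorem measurable_lintegral_Ioo {α : Type*} [MeasurableSpace α] {g : α → ℝ → ENNReal} {r : α → ℝ}
    (hg : Measurable (uncurry g)) (hr : Measurable r) :
    Measurable fun x => ∫⁻ s in Ioo 0 (r x), g x s := by
  have hset : MeasurableSet {q : α × ℝ | q.2 ∈ Ioo 0 (r q.1)} := by
    simp only [mem_Ioo]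
    measurability
  simp only [← lintegral_indicator measurableSet_Ioo]
  exact (hg.indicator hset).lintegral_prod_right'

variable {F : (Fin (n + 1) → ℝ) × (Fin (n + 1) → ℝ) → ENNReal}

theorem lintegral_indicator_interlacingPairs_add (hF : Measurable F) (L : ℝ)
    (θ : Fin (n + 1) → ℝ) :
    ∫⁻ a, (interlacingPairs n L).indicator F (a, a + θ) =
      (openSimplex (n + 1) L).indicator (fun θ =>
        ∫⁻ h, (∫⁻ s in Ioo 0 (h (Fin.last n)), F (arcsFrom θ h s))
          ∂simplexMeasure n (L - ∑ i, θ i)) θ := by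
  have hind := hF.indicator (measurableSet_interlacingPairs n L)
  have hadd := measurePreserving_add_partialSum (Fin.init θ)
  have hmeas : Measurable fun a => (interlacingPairs n L).indicator F (a, a + θ) := by fun_prop
  have hcomp := hmeas.comp hadd.measurable
  simp only [comp_def, add_partialSum_eq_arcsFrom L] at hcomp
  rw [← hadd.lintegral_comp hmeas, Measure.volume_eq_prod]
  simp only [add_partialSum_eq_arcsFrom L]
  rw [lintegral_prod_symm _ hcomp.aemeasurable]
  have hmeas_inner : Measurable fun h : Fin (n + 1) → ℝ =>
      ∫⁻ s in Ioo 0 (h (Fin.last n)), F (arcsFrom θ h s) :=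
    measurable_lintegral_Ioo (hF.comp (measurable_arcsFrom.comp
      ((measurable_prodMk_left.comp measurable_fst).prodMk measurable_snd)))
      (measurable_pi_apply _)
  by_cases hθ : θ ∈ openSimplex (n + 1) L
  · rw [indicator_of_mem hθ, lintegral_simplexMeasure hmeas_inner,
      ← lintegral_indicator (measurableSet_openSimplex _ _)]
    refine lintegral_congr fun y => ?_
    by_cases hy : y ∈ openSimplex n (L - ∑ i, θ i)
    · rw [indicator_of_mem hy, ← lintegral_indicator measurableSet_Ioo]
      simp only [indicator, arcsFrom_snocSubSum_mem_interlacingPairs, hθ, hy, true_and]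
    · simp [indicator, arcsFrom_snocSubSum_mem_interlacingPairs, hy]
  · simp [indicator, arcsFrom_snocSubSum_mem_interlacingPairs, hθ]

theorem lintegral_interlacingPairs (hF : Measurable F) (L : ℝ) :
    ∫⁻ q in interlacingPairs n L, F q = ∫⁻ θ in openSimplex (n + 1) L, ∫⁻ h,
      (∫⁻ s in Ioo 0 (h (Fin.last n)), F (arcsFrom θ h s)) ∂simplexMeasure n (L - ∑ i, θ i) := by
  have hind := hF.indicator (measurableSet_interlacingPairs n L)
  rw [← lintegral_indicator (measurableSet_interlacingPairs n L),
    ← lintegral_indicator (measurableSet_openSimplex _ _), Measure.volume_eq_prod,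
    lintegral_prod _ hind.aemeasurable]
  calc ∫⁻ a, ∫⁻ b, (interlacingPairs n L).indicator F (a, b)
      = ∫⁻ a, ∫⁻ θ, (interlacingPairs n L).indicator F (a, a + θ) :=
        lintegral_congr fun a => (lintegral_add_left_eq_self _ a).symm
    _ = ∫⁻ θ, ∫⁻ a, (interlacingPairs n L).indicator F (a, a + θ) :=
        lintegral_lintegral_swap (by simp only [uncurry_def]; fun_prop)
    _ = _ := lintegral_congr fun θ => lintegral_indicator_interlacingPairs_add hF L θ

end Interlacing

section GapIntegral

variable {n : ℕ} {u : ℝ} {θ h : Fin (n + 1) → ℝ}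

theorem partialSum_cyclicShift (y : Fin (n + 1) → ℝ) (i : Fin (n + 1)) :
    Fin.partialSum (cyclicShift y) i.castSucc = Fin.partialSum y i.succ - y 0 := by
  have hinit : Fin.init (cyclicShift y) = Fin.tail y := by
    funext k
    simp [Fin.init, Fin.tail, cyclicShift, Fin.coeSucc_eq_succ]
  rw [Fin.partialSum_succ', ← Fin.partialSum_init, hinit, add_sub_cancel_left]

theorem exists_arcLeft_cyclicShift (hsum : ∑ i, θ i + ∑ i, h i = π) (i : Fin (n + 1)) :
    ∃ k : ℤ, arcLeft (cyclicShift θ) (cyclicShift h) i + (θ 0 + h 0) =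
      arcLeft θ h (i + 1) + k * π := by
  have hshift : arcLeft (cyclicShift θ) (cyclicShift h) i + (θ 0 + h 0) =
      Fin.partialSum (θ + h) i.succ :=
    eq_sub_iff_add_eq.1 (partialSum_cyclicShift (θ + h) i)
  rw [hshift]
  refine Fin.lastCases ⟨1, ?_⟩ (fun i => ⟨0, ?_⟩) i
  · rw [Fin.last_add_one, arcLeft_zero, Fin.succ_last, partialSum_last, ← hsum,
      ← Finset.sum_add_distrib]
    simp
  · rw [Fin.coeSucc_eq_succ, arcLeft, Fin.succ_castSucc, Int.cast_zero, zero_mul, add_zero]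

theorem abs_sin_add_int_mul_pi (x : ℝ) (k : ℤ) : |Real.sin (x + k * π)| = |Real.sin x| := by
  rw [Real.sin_add_int_mul_pi, abs_mul, abs_zpow, abs_neg, abs_one, one_zpow, one_mul]

theorem arcWeight_periodic {ι : Type*} [Fintype ι] (u : ℝ) (a b : ι → ℝ) :
    Periodic (arcWeight u a b) π := fun t => by
  simp only [arcWeight, add_sub_right_comm, Real.sin_add_pi, abs_neg]

theorem arcWeight_add_left {ι : Type*} [Fintype ι] (u : ℝ) (a b : ι → ℝ) (s t : ℝ) :
    arcWeight u (fun i => s + a i) (fun i => s + b i) t = arcWeight u a b (t - s) := by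
  simp only [arcWeight, sub_add_eq_sub_sub]

theorem arcWeight_cyclicShift (u : ℝ) (hsum : ∑ i, θ i + ∑ i, h i = π) (t : ℝ) :
    arcWeight u (arcLeft (cyclicShift θ) (cyclicShift h))
        (arcRight (cyclicShift θ) (cyclicShift h)) t =
      arcWeight u (arcLeft θ h) (arcRight θ h) (t + (θ 0 + h 0)) := by
  rw [arcWeight, arcWeight, ← Equiv.prod_comp (Equiv.addRight 1) fun i =>
    (|Real.sin (t + (θ 0 + h 0) - arcLeft θ h i)| /
      |Real.sin (t + (θ 0 + h 0) - arcRight θ h i)|) ^ (2 * u)]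
  refine Finset.prod_congr rfl fun i _ => ?_
  obtain ⟨k, hk⟩ := exists_arcLeft_cyclicShift hsum i
  have hleft : t + (θ 0 + h 0) - arcLeft θ h (i + 1) =
      t - arcLeft (cyclicShift θ) (cyclicShift h) i + k * π := by linarith
  have hright : t + (θ 0 + h 0) - arcRight θ h (i + 1) =
      t - arcRight (cyclicShift θ) (cyclicShift h) i + k * π := by
    rw [arcRight, arcRight, cyclicShift]
    linarith
  rw [Equiv.coe_addRight, hleft, hright, abs_sin_add_int_mul_pi, abs_sin_add_int_mul_pi]

/-- The integral of the weight of the arcs over the `j`-th gap. -/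
noncomputable def gapIntegral (u : ℝ) (j : Fin (n + 1)) (θ h : Fin (n + 1) → ℝ) : ENNReal :=
  ∫⁻ s in Ioo 0 (h j),
    ENNReal.ofReal (arcWeight u (arcLeft θ h) (arcRight θ h) (arcRight θ h j + s))

theorem measurable_arcWeight {α ι : Type*} [MeasurableSpace α] [Fintype ι] (u : ℝ)
    {a b : α → ι → ℝ} {t : α → ℝ} (ha : Measurable a) (hb : Measurable b) (ht : Measurable t) :
    Measurable fun x => arcWeight u (a x) (b x) (t x) := by
  unfold arcWeight
  fun_prop

theorem measurable_gapIntegral (u : ℝ) (j : Fin (n + 1)) :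
    Measurable fun q : (Fin (n + 1) → ℝ) × (Fin (n + 1) → ℝ) => gapIntegral u j q.1 q.2 := by
  have hleft : Measurable fun q : (Fin (n + 1) → ℝ) × (Fin (n + 1) → ℝ) => arcLeft q.1 q.2 :=
    measurable_pi_iff.2 measurable_arcLeft
  have hright : Measurable fun q : (Fin (n + 1) → ℝ) × (Fin (n + 1) → ℝ) => arcRight q.1 q.2 :=
    measurable_pi_iff.2 measurable_arcRight
  have hweight : Measurable (uncurry fun (q : (Fin (n + 1) → ℝ) × (Fin (n + 1) → ℝ)) (s : ℝ) =>
      arcWeight u (arcLeft q.1 q.2) (arcRight q.1 q.2) (arcRight q.1 q.2 j + s)) :=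
    measurable_arcWeight u (hleft.comp measurable_fst) (hright.comp measurable_fst)
      (((measurable_arcRight j).comp measurable_fst).add measurable_snd)
  have hlength : Measurable fun q : (Fin (n + 1) → ℝ) × (Fin (n + 1) → ℝ) => q.2 j :=
    (measurable_pi_apply j).comp measurable_snd
  exact measurable_lintegral_Ioo hweight.ennreal_ofReal hlength

theorem gapIntegral_cyclicShift (u : ℝ) (j : Fin (n + 1)) (hsum : ∑ i, θ i + ∑ i, h i = π) :
    gapIntegral u j (cyclicShift θ) (cyclicShift h) = gapIntegral u (j + 1) θ h := by
  obtain ⟨k, hk⟩ := exists_arcLeft_cyclicShift hsum j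
  refine lintegral_congr fun s => ?_
  have hshift : arcRight (cyclicShift θ) (cyclicShift h) j + s + (θ 0 + h 0) =
      arcRight θ h (j + 1) + s + k * π := by
    rw [arcRight, arcRight, cyclicShift]
    linarith
  rw [arcWeight_cyclicShift u hsum, hshift, (arcWeight_periodic u _ _).int_mul k]

theorem lintegral_Ioo_sub_left (g : ℝ → ENNReal) (c : ℝ) :
    ∫⁻ s in Ioo 0 c, g (c - s) = ∫⁻ s in Ioo 0 c, g s := by
  simpa using (Measure.measurePreserving_sub_left volume c).setLIntegral_comp_preimage_emb
    (MeasurableEquiv.subLeft c).measurableEmbedding g (Ioo 0 c)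

theorem lintegral_arcWeight_arcsFrom (u : ℝ) (hsum : ∑ i, θ i + ∑ i, h i = π) :
    ∫⁻ s in Ioo 0 (h (Fin.last n)),
        ENNReal.ofReal (arcWeight u (arcsFrom θ h s).1 (arcsFrom θ h s).2 0) =
      gapIntegral u (Fin.last n) θ h := by
  refine Eq.trans (lintegral_congr fun s => ?_) (lintegral_Ioo_sub_left _ _)
  rw [arcsFrom, arcWeight_add_left, ← add_sub_assoc, arcRight_last_add, hsum, ← zero_add π,
    add_sub_right_comm, arcWeight_periodic]

theorem strictMono_partialSum_add (hθ : ∀ i, 0 < θ i) (hh : ∀ i, 0 < h i) :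
    StrictMono (Fin.partialSum (θ + h)) :=
  Fin.strictMono_iff_lt_succ.2 fun i => by
    rw [Fin.partialSum_succ]
    exact lt_add_of_pos_right _ (add_pos (hθ i) (hh i))

theorem arcRight_add_le_arcLeft (hθ : ∀ i, 0 < θ i) (hh : ∀ i, 0 < h i) {i j : Fin (n + 1)}
    (hij : i < j) : arcRight θ h i + h i ≤ arcLeft θ h j := by
  rw [arcRight_add, arcLeft]
  exact (strictMono_partialSum_add hθ hh).monotone (Fin.succ_le_castSucc_iff.2 hij)

theorem arcLeft_nonneg (hθ : ∀ i, 0 < θ i) (hh : ∀ i, 0 < h i) (i : Fin (n + 1)) :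
    0 ≤ arcLeft θ h i := by
  rw [← Fin.partialSum_zero (θ + h)]
  exact (strictMono_partialSum_add hθ hh).monotone (Fin.zero_le _)

theorem arcRight_add_le (hθ : ∀ i, 0 < θ i) (hh : ∀ i, 0 < h i) (i : Fin (n + 1)) :
    arcRight θ h i + h i ≤ ∑ i, θ i + ∑ i, h i := by
  rw [← arcRight_last_add, arcRight_add, arcRight_add]
  exact (strictMono_partialSum_add hθ hh).monotone (Fin.succ_le_succ_iff.2 (Fin.le_last i))

theorem isArcSystem_arcLeft_arcRight (hθ : ∀ i, 0 < θ i) (hh : ∀ i, 0 < h i)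
    (hsum : ∑ i, θ i + ∑ i, h i = π) : IsArcSystem (arcLeft θ h) (arcRight θ h) where
  nonneg := arcLeft_nonneg hθ hh
  lt i := lt_add_of_pos_right _ (hθ i)
  lt_pi i := (lt_add_of_pos_right _ (hh i)).trans_le ((arcRight_add_le hθ hh i).trans_eq hsum)
  disjoint i j hij := hij.lt_or_gt.imp
    (fun hlt => (lt_add_of_pos_right _ (hh i)).trans_le (arcRight_add_le_arcLeft hθ hh hlt))
    (fun hlt => (lt_add_of_pos_right _ (hh j)).trans_le (arcRight_add_le_arcLeft hθ hh hlt))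

theorem exists_mem_Ioc_castSucc_succ {g : Fin (n + 1) → ℝ} {t : ℝ}
    (ht : t ∈ Ioc (g 0) (g (Fin.last n))) : ∃ j : Fin n, t ∈ Ioc (g j.castSucc) (g j.succ) := by
  by_contra! hnot
  refine ht.2.not_gt (Fin.induction ht.1 (fun j hj => ?_) (Fin.last n))
  exact lt_of_not_ge fun hle => hnot j ⟨hj, hle⟩

theorem iUnion_gaps_eq_diff_iUnion_arcs (hθ : ∀ i, 0 < θ i) (hh : ∀ i, 0 < h i) :
    ⋃ j, Ioc (arcRight θ h j) (arcRight θ h j + h j) =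
      Ioc 0 (∑ i, θ i + ∑ i, h i) \ ⋃ j, Ioc (arcLeft θ h j) (arcRight θ h j) := by
  ext t
  simp only [mem_iUnion, Set.mem_sdiff, not_exists]
  constructor
  · rintro ⟨j, hleft, hright⟩
    have hle : arcLeft θ h j ≤ arcRight θ h j := le_add_of_nonneg_right (hθ j).le
    refine ⟨⟨?_, hright.trans (arcRight_add_le hθ hh j)⟩, fun i hi => ?_⟩
    · linarith [arcLeft_nonneg hθ hh j]
    · rcases lt_trichotomy i j with hij | rfl | hij
      · linarith [arcRight_add_le_arcLeft hθ hh hij, hi.2, hh i]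
      · exact hi.2.not_gt hleft
      · linarith [arcRight_add_le_arcLeft hθ hh hij, hi.1]
  · rintro ⟨ht, hnot⟩
    have hlast : Fin.partialSum (θ + h) (Fin.last (n + 1)) = ∑ i, θ i + ∑ i, h i := by
      rw [← arcRight_last_add, arcRight_add, Fin.succ_last]
    rw [← Fin.partialSum_zero (θ + h), ← hlast] at ht
    obtain ⟨j, hleft, hright⟩ := exists_mem_Ioc_castSucc_succ ht
    refine ⟨j, ?_, hright.trans_eq (arcRight_add θ h j).symm⟩
    exact lt_of_not_ge fun hle => hnot j ⟨hleft, hle⟩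

theorem pairwise_disjoint_gaps (hθ : ∀ i, 0 < θ i) (hh : ∀ i, 0 < h i) :
    Pairwise (Disjoint on fun j => Ioc (arcRight θ h j) (arcRight θ h j + h j)) := by
  refine (pairwise_disjoint_on _).2 fun i j hij => ?_
  refine disjoint_left.2 fun t hi hj => ?_
  linarith [arcRight_add_le_arcLeft hθ hh hij, hi.2, hj.1, hθ j, arcRight.eq_1 θ h j]

theorem gapIntegral_eq_lintegral_Ioc (u : ℝ) (j : Fin (n + 1)) (θ h : Fin (n + 1) → ℝ) :
    gapIntegral u j θ h = ∫⁻ t in Ioc (arcRight θ h j) (arcRight θ h j + h j),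
      ENNReal.ofReal (arcWeight u (arcLeft θ h) (arcRight θ h) t) := by
  rw [← (measurePreserving_add_left volume (arcRight θ h j)).setLIntegral_comp_preimage_emb
    (measurableEmbedding_addLeft _), preimage_const_add_Ioc, sub_self, add_sub_cancel_left,
    gapIntegral, setLIntegral_congr Ioo_ae_eq_Ioc]

theorem sum_gapIntegral (hu : u ∈ Ioo (-(1 / 2)) (1 / 2)) (hθ : ∀ i, 0 < θ i) (hh : ∀ i, 0 < h i)
    (hsum : ∑ i, θ i + ∑ i, h i = π) :
    ∑ j, gapIntegral u j θ h =
      ENNReal.ofReal ((∑ i, h i) * (Real.sinc (2 * u * ∑ i, h i) / Real.sinc (2 * π * u))) := by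
  have harcs := isArcSystem_arcLeft_arcRight hθ hh hsum
  have hgaps : π - ∑ j, (arcRight θ h j - arcLeft θ h j) = ∑ i, h i := by
    simp only [arcRight, add_sub_cancel_left, ← hsum]
  rw [← hgaps, ← harcs.integral_arcWeight hu, ofReal_integral_eq_lintegral_ofReal
      ((harcs.integrableOn_arcWeight hu).mono_set sdiff_subset)
      (ae_of_all _ fun t => arcWeight_nonneg u _ _ t), ← hsum,
    ← iUnion_gaps_eq_diff_iUnion_arcs hθ hh,
    lintegral_iUnion (fun j => measurableSet_Ioc) (pairwise_disjoint_gaps hθ hh), tsum_fintype]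
  exact Finset.sum_congr rfl fun j _ => gapIntegral_eq_lintegral_Ioc u j θ h

end GapIntegral

section Averaging

variable {n : ℕ} {u : ℝ} {θ : Fin (n + 1) → ℝ}

/-- The integral of `gapIntegral u j θ` over all gap vectors that complete the arcs to `(0, π)`. -/
noncomputable def gapMass (u : ℝ) (j : Fin (n + 1)) (θ : Fin (n + 1) → ℝ) : ENNReal :=
  ∫⁻ h, gapIntegral u j θ h ∂simplexMeasure n (π - ∑ i, θ i)

/-- The weight carried by all the configurations of `n + 1` arcs with gaps of total length `L`. -/
noncomputable def gapDensity (n : ℕ) (u L : ℝ) : ℝ :=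
  Real.sinc (2 * u * L) / Real.sinc (2 * π * u) * (L ^ (n + 1) / (n + 1).factorial)

theorem measurable_gapMass (u : ℝ) (j : Fin (n + 1)) : Measurable (gapMass u j) :=
  measurable_lintegral_simplexMeasure (measurable_gapIntegral u j) (by fun_prop)

theorem gapMass_cyclicShift (u : ℝ) (j : Fin (n + 1)) (θ : Fin (n + 1) → ℝ) :
    gapMass u j (cyclicShift θ) = gapMass u (j + 1) θ := by
  rw [gapMass, sum_cyclicShift,
    ← (measurePreserving_cyclicShift_simplexMeasure n _).lintegral_comp
      (measurable_gapIntegral u j).of_uncurry_left]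
  refine lintegral_congr_ae ?_
  filter_upwards [ae_simplexMeasure n (π - ∑ i, θ i)] with h hh
  exact gapIntegral_cyclicShift u j (by rw [hh.2, add_sub_cancel])

theorem sum_gapMass (hu : u ∈ Ioo (-(1 / 2)) (1 / 2)) (hθ : θ ∈ openSimplex (n + 1) π) :
    ∑ j, gapMass u j θ = (n + 1) * ENNReal.ofReal (gapDensity n u (π - ∑ i, θ i)) := by
  set L := π - ∑ i, θ i with hL
  have hLpos : 0 < L := sub_pos.2 hθ.2
  calc ∑ j, gapMass u j θ
      = ∫⁻ h, ∑ j, gapIntegral u j θ h ∂simplexMeasure n L :=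
        (lintegral_finsetSum _ fun j _ => (measurable_gapIntegral u j).of_uncurry_left).symm
    _ = ∫⁻ _, ENNReal.ofReal (L * (Real.sinc (2 * u * L) / Real.sinc (2 * π * u)))
          ∂simplexMeasure n L := by
        refine lintegral_congr_ae ?_
        filter_upwards [ae_simplexMeasure n L] with h hh
        rw [sum_gapIntegral hu hθ.1 hh.1 (by rw [hh.2, hL, add_sub_cancel]), hh.2]
    _ = (n + 1) * ENNReal.ofReal (gapDensity n u L) := by
        rw [lintegral_const, simplexMeasure_univ hLpos, ← ENNReal.ofReal_mul' (by positivity),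
          ← Nat.cast_succ, ← ENNReal.ofReal_natCast, ← ENNReal.ofReal_mul (by positivity),
          gapDensity, Nat.factorial_succ]
        congr 1
        push_cast
        field_simp
        ring

variable {G : (Fin (n + 1) → ℝ) → ENNReal}

theorem lintegral_gapMass_mul_eq_last (hG : Measurable G) (hinv : ∀ θ, G (cyclicShift θ) = G θ)
    (u : ℝ) (j : Fin (n + 1)) :
    ∫⁻ θ in openSimplex (n + 1) π, gapMass u j θ * G θ =
      ∫⁻ θ in openSimplex (n + 1) π, gapMass u (Fin.last n) θ * G θ := by
  refine Fin.reverseInduction rfl (fun j hj => ?_) j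
  rw [← hj, ← (measurePreserving_cyclicShift_openSimplex n π).lintegral_comp
    ((measurable_gapMass u _).fun_mul hG)]
  simp only [gapMass_cyclicShift, hinv, Fin.coeSucc_eq_succ]

/- Cyclic invariance makes the `n + 1` gaps contribute equally, so the mass of the last gap may be
replaced by the average of `sum_gapMass`. -/
theorem lintegral_gapMass_last_mul (hu : u ∈ Ioo (-(1 / 2)) (1 / 2)) (hG : Measurable G)
    (hinv : ∀ θ, G (cyclicShift θ) = G θ) :
    ∫⁻ θ in openSimplex (n + 1) π, gapMass u (Fin.last n) θ * G θ =
      ∫⁻ θ in openSimplex (n + 1) π, ENNReal.ofReal (gapDensity n u (π - ∑ i, θ i)) * G θ := by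
  have hcount : (n + 1 : ENNReal) ≠ 0 := by positivity
  refine (ENNReal.mul_right_inj hcount (by finiteness)).1 ?_
  calc (n + 1) * ∫⁻ θ in openSimplex (n + 1) π, gapMass u (Fin.last n) θ * G θ
      = ∑ j, ∫⁻ θ in openSimplex (n + 1) π, gapMass u j θ * G θ := by
        simp [lintegral_gapMass_mul_eq_last hG hinv]
    _ = ∫⁻ θ in openSimplex (n + 1) π, (∑ j, gapMass u j θ) * G θ := by
        rw [← lintegral_finsetSum _ fun j _ => (measurable_gapMass u j).fun_mul hG]
        simp only [Finset.sum_mul]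
    _ = ∫⁻ θ in openSimplex (n + 1) π,
          (n + 1) * (ENNReal.ofReal (gapDensity n u (π - ∑ i, θ i)) * G θ) := by
        refine setLIntegral_congr_fun (measurableSet_openSimplex _ _) fun θ hθ => ?_
        simp only [sum_gapMass hu hθ, mul_assoc]
    _ = _ := lintegral_const_mul' _ _ (by finiteness)

theorem lintegral_interlacingPairs_arcWeight_mul (hu : u ∈ Ioo (-(1 / 2)) (1 / 2))
    (hG : Measurable G) (hinv : ∀ θ, G (cyclicShift θ) = G θ) :
    ∫⁻ q in interlacingPairs n π, ENNReal.ofReal (arcWeight u q.1 q.2 0) * G (q.2 - q.1) =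
      ∫⁻ θ in openSimplex (n + 1) π, ENNReal.ofReal (gapDensity n u (π - ∑ i, θ i)) * G θ := by
  have hweight : Measurable fun q : (Fin (n + 1) → ℝ) × (Fin (n + 1) → ℝ) =>
      ENNReal.ofReal (arcWeight u q.1 q.2 0) :=
    (measurable_arcWeight u measurable_fst measurable_snd measurable_const).ennreal_ofReal
  rw [lintegral_interlacingPairs (hweight.fun_mul (by fun_prop)),
    ← lintegral_gapMass_last_mul hu hG hinv]
  refine lintegral_congr fun θ => ?_
  rw [gapMass, ← lintegral_mul_const _ (measurable_gapIntegral u _).of_uncurry_left]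
  refine lintegral_congr_ae ?_
  filter_upwards [ae_simplexMeasure n (π - ∑ i, θ i)] with h hh
  have hlengths : ∀ s, (arcsFrom θ h s).2 - (arcsFrom θ h s).1 = θ := fun s => by
    funext i
    simp [arcsFrom, arcRight]
  simp only [hlengths]
  rw [lintegral_mul_const, lintegral_arcWeight_arcsFrom u (by rw [hh.2, add_sub_cancel])]
  exact hweight.comp (measurable_arcsFrom.comp (measurable_prodMk_left (x := (θ, h))))

end Averaging

section RealIntegral

theorem map_withDensity_apply {α : Type*} [MeasurableSpace α] {μ : Measure α} (w : α → ENNReal)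
    {P : α → ℝ} (hP : Measurable P) {S : Set ℝ} (hS : MeasurableSet S) :
    (μ.withDensity w).map P S = ∫⁻ x, w x * S.indicator 1 (P x) ∂μ := by
  rw [Measure.map_apply hP hS, withDensity_apply _ (hP hS), ← lintegral_indicator (hP hS)]
  refine lintegral_congr fun x => ?_
  by_cases hx : P x ∈ S <;> simp [hx]

theorem integral_mul_eq_integral_map_withDensity {α : Type*} [MeasurableSpace α] {μ : Measure α}
    {w P : α → ℝ} (hw : Measurable w) (hw0 : 0 ≤ᵐ[μ] w) (hP : Measurable P) :
    ∫ x, w x * P x ∂μ = ∫ y, y ∂(μ.withDensity fun x => ENNReal.ofReal (w x)).map P := by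
  rw [integral_map hP.aemeasurable measurable_id'.aestronglyMeasurable,
    integral_withDensity_eq_integral_toReal_smul hw.ennreal_ofReal
      (ae_of_all _ fun _ => ENNReal.ofReal_lt_top)]
  refine integral_congr_ae ?_
  filter_upwards [hw0] with x hx
  rw [ENNReal.toReal_ofReal hx, smul_eq_mul]

variable {n : ℕ} {u : ℝ}

theorem gapDensity_nonneg (hu : u ∈ Ioo (-(1 / 2)) (1 / 2)) {L : ℝ} (hL : L ∈ Ioo 0 π) :
    0 ≤ gapDensity n u L := by
  have hsmall : |2 * u * L| < π := by
    rw [abs_mul, abs_of_pos hL.1]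
    have hu1 : |2 * u| ≤ 1 := abs_le.2 ⟨by linarith [hu.1], by linarith [hu.2]⟩
    exact (mul_le_of_le_one_left hL.1.le hu1).trans_lt hL.2
  exact mul_nonneg (div_nonneg (sinc_pos hsmall).le (sinc_two_mul_pi_mul_pos hu).le)
    (div_nonneg (pow_nonneg hL.1.le _) (Nat.cast_nonneg _))

theorem measurable_gapDensity (n : ℕ) (u : ℝ) : Measurable (gapDensity n u) := by
  have _ : Measurable Real.sinc := Real.continuous_sinc.measurable
  unfold gapDensity
  fun_prop

theorem ae_gapDensity_nonneg (hu : u ∈ Ioo (-(1 / 2)) (1 / 2)) :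
    ∀ᵐ θ ∂volume.restrict (openSimplex (n + 1) π), 0 ≤ gapDensity n u (π - ∑ i, θ i) := by
  filter_upwards [ae_restrict_mem (measurableSet_openSimplex (n + 1) π)] with θ hθ
  have hsum : 0 < ∑ i, θ i := Finset.sum_pos (fun i _ => hθ.1 i) Finset.univ_nonempty
  exact gapDensity_nonneg hu ⟨sub_pos.2 hθ.2, sub_lt_self _ hsum⟩

/- Both sides are `∫ y dν(y)` for the same pushforward measure `ν` on the line; when they do
not converge, both have the junk value `0`. -/
theorem integral_interlacingPairs_arcWeight_mul (hu : u ∈ Ioo (-(1 / 2)) (1 / 2))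
    {P : (Fin (n + 1) → ℝ) → ℝ} (hP : Measurable P) (hinv : ∀ θ, P (cyclicShift θ) = P θ) :
    ∫ q in interlacingPairs n π, arcWeight u q.1 q.2 0 * P (q.2 - q.1) =
      ∫ θ in openSimplex (n + 1) π, gapDensity n u (π - ∑ i, θ i) * P θ := by
  have hweight : Measurable fun q : (Fin (n + 1) → ℝ) × (Fin (n + 1) → ℝ) =>
      arcWeight u q.1 q.2 0 :=
    measurable_arcWeight u measurable_fst measurable_snd measurable_const
  have hdensity : Measurable fun θ : Fin (n + 1) → ℝ => gapDensity n u (π - ∑ i, θ i) :=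
    (measurable_gapDensity n u).comp (by fun_prop)
  have hPsub : Measurable fun q : (Fin (n + 1) → ℝ) × (Fin (n + 1) → ℝ) => P (q.2 - q.1) :=
    hP.comp (measurable_snd.sub measurable_fst)
  rw [integral_mul_eq_integral_map_withDensity hweight
      (ae_of_all _ fun _ => arcWeight_nonneg u _ _ 0) hPsub,
    integral_mul_eq_integral_map_withDensity hdensity (ae_gapDensity_nonneg hu) hP]
  congr 1
  ext S hS
  have hlint := lintegral_interlacingPairs_arcWeight_mul hu
    (G := fun θ => S.indicator 1 (P θ)) ((measurable_one.indicator hS).comp hP)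
    (fun θ => by rw [hinv])
  rwa [map_withDensity_apply _ hPsub hS, map_withDensity_apply _ hP hS]

end RealIntegral

section EvenOdd

variable {p n : ℕ}

theorem two_mul_val_lt (i : Fin p) : 2 * i.val < 2 * p := by omega

theorem two_mul_val_add_one_lt (i : Fin p) : 2 * i.val + 1 < 2 * p := by omega

/-- The index `2i`, at which a strictly increasing vector in `ℝ²ᵖ` carries `αᵢ`. -/
def evenIndex (i : Fin p) : Fin (2 * p) := ⟨2 * i.val, two_mul_val_lt i⟩

/-- The index `2i + 1`, at which a strictly increasing vector in `ℝ²ᵖ` carries `βᵢ`. -/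
def oddIndex (i : Fin p) : Fin (2 * p) := ⟨2 * i.val + 1, two_mul_val_add_one_lt i⟩

theorem bijective_elim_evenIndex_oddIndex :
    Bijective (Sum.elim evenIndex oddIndex : Fin p ⊕ Fin p → Fin (2 * p)) := by
  refine (Fintype.bijective_iff_injective_and_card _).2 ⟨?_, by simp [two_mul]⟩
  rintro (i | i) (j | j) hij <;>
    simp only [Sum.elim_inl, Sum.elim_inr, evenIndex, oddIndex, Fin.ext_iff, Sum.inl.injEq,
      Sum.inr.injEq, reduceCtorEq] at hij ⊢ <;> omega

/-- The separation of a vector in `ℝ²ᵖ` into its coordinates of even and of odd index. -/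
noncomputable def evenOddSplit (p : ℕ) :
    (Fin (2 * p) → ℝ) ≃ᵐ (Fin p → ℝ) × (Fin p → ℝ) :=
  (MeasurableEquiv.piCongrLeft (fun _ => ℝ)
    (Equiv.ofBijective _ bijective_elim_evenIndex_oddIndex)).symm.trans
    (MeasurableEquiv.sumPiEquivProdPi fun _ => ℝ)

theorem evenOddSplit_apply (x : Fin (2 * p) → ℝ) :
    evenOddSplit p x = (x ∘ evenIndex, x ∘ oddIndex) := rfl

theorem measurePreserving_evenOddSplit (p : ℕ) : MeasurePreserving (evenOddSplit p) :=
  (volume_measurePreserving_sumPiEquivProdPi fun _ => ℝ).comp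
    (volume_measurePreserving_piCongrLeft (fun _ => ℝ) _).symm

theorem strictMono_iff_evenIndex_oddIndex {x : Fin (2 * (n + 1)) → ℝ} :
    StrictMono x ↔ (∀ i, x (evenIndex i) < x (oddIndex i)) ∧
      ∀ i : Fin n, x (oddIndex i.castSucc) < x (evenIndex i.succ) := by
  refine (Fin.strictMono_iff_lt_succ (n := 2 * n + 1)).trans ⟨fun hx => ⟨fun i => ?_, fun i => ?_⟩,
    fun hx k => ?_⟩
  · exact hx ⟨2 * i, by omega⟩
  · exact hx ⟨2 * i + 1, by omega⟩
  · have hk := k.isLt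
    obtain ⟨i, hi | hi⟩ := Nat.even_or_odd' k.val
    · have hleft : k.castSucc = evenIndex (⟨i, by omega⟩ : Fin (n + 1)) := Fin.ext hi
      have hright : k.succ = oddIndex (⟨i, by omega⟩ : Fin (n + 1)) := Fin.ext (congrArg (· + 1) hi)
      rw [hleft, hright]
      exact hx.1 _
    · have hleft : k.castSucc = oddIndex (⟨i, by omega⟩ : Fin n).castSucc := Fin.ext hi
      have hright : k.succ = evenIndex (⟨i, by omega⟩ : Fin n).succ := Fin.ext (congrArg (· + 1) hi)
      rw [hleft, hright]
      exact hx.2 _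

theorem preimage_evenOddSplit_interlacingPairs (n : ℕ) (L : ℝ) :
    evenOddSplit (n + 1) ⁻¹' interlacingPairs n L =
      {x | StrictMono x ∧ ∀ i, 0 < x i ∧ x i < L} := by
  ext x
  have hfirst : evenIndex (0 : Fin (n + 1)) = 0 := rfl
  have hlast : oddIndex (Fin.last n) = Fin.last (2 * n + 1) := rfl
  simp only [interlacingPairs, mem_preimage, evenOddSplit_apply, mem_ofPred_eq, comp_apply,
    strictMono_iff_evenIndex_oddIndex, hfirst, hlast]
  constructor
  · rintro ⟨hpos, hlt, hgap, hL⟩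
    have hmono := (strictMono_iff_evenIndex_oddIndex.2 ⟨hlt, hgap⟩).monotone
    exact ⟨⟨hlt, hgap⟩, fun i => ⟨hpos.trans_le (hmono (Fin.zero_le i)),
      (hmono (Fin.le_last i)).trans_lt hL⟩⟩
  · rintro ⟨⟨hlt, hgap⟩, hbd⟩
    exact ⟨(hbd _).1, hlt, hgap, (hbd _).2⟩

theorem setIntegral_strictMono_eq_interlacingPairs (n : ℕ) (L : ℝ)
    (g : (Fin (n + 1) → ℝ) × (Fin (n + 1) → ℝ) → ℝ) :
    ∫ x in {x : Fin (2 * (n + 1)) → ℝ | StrictMono x ∧ ∀ i, 0 < x i ∧ x i < L},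
      g (x ∘ evenIndex, x ∘ oddIndex) = ∫ q in interlacingPairs n L, g q := by
  rw [← preimage_evenOddSplit_interlacingPairs]
  exact (measurePreserving_evenOddSplit (n + 1)).setIntegral_preimage_emb
    (evenOddSplit (n + 1)).measurableEmbedding g _

theorem mem_Ioo_of_mem_interlacingPairs {L : ℝ} {q : (Fin (n + 1) → ℝ) × (Fin (n + 1) → ℝ)}
    (hq : q ∈ interlacingPairs n L) (i : Fin (n + 1)) : q.1 i ∈ Ioo 0 L ∧ q.2 i ∈ Ioo 0 L := by
  obtain ⟨x, rfl⟩ := (evenOddSplit (n + 1)).surjective q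
  rw [← mem_preimage, preimage_evenOddSplit_interlacingPairs] at hq
  exact ⟨hq.2 _, hq.2 _⟩

theorem arcWeight_zero_eq_prod_sin_div_sin (u : ℝ) {q : (Fin (n + 1) → ℝ) × (Fin (n + 1) → ℝ)}
    (hq : q ∈ interlacingPairs n π) :
    arcWeight u q.1 q.2 0 = ∏ i, (Real.sin (q.1 i) / Real.sin (q.2 i)) ^ (2 * u) := by
  refine Finset.prod_congr rfl fun i _ => ?_
  obtain ⟨ha, hb⟩ := mem_Ioo_of_mem_interlacingPairs hq i
  rw [zero_sub, zero_sub, Real.sin_neg, Real.sin_neg, abs_neg, abs_neg,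
    abs_of_pos (Real.sin_pos_of_mem_Ioo ha), abs_of_pos (Real.sin_pos_of_mem_Ioo hb)]

end EvenOdd

section Main

variable {n : ℕ} {u : ℝ} {f : ℝ → ℝ}

theorem integral_openSimplex_gapDensity_mul_prod (n : ℕ) (u : ℝ) (hf : Measurable f) :
    ∫ θ in openSimplex (n + 1) π, gapDensity n u (π - ∑ i, θ i) * ∏ i, f (θ i) =
      ∫ θ in openSimplex (n + 1) π,
        gapDensity n u (θ 0) * (∏ i : Fin n, f (θ i.succ)) * f (π - ∑ i, θ i) := by
  have hdensity := measurable_gapDensity n u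
  have hswap := measurePreserving_cons_sub_sum_tail_openSimplex n π
  rw [← hswap.map_eq, integral_map hswap.measurable.aemeasurable
    (by fun_prop : Measurable _).aestronglyMeasurable, hswap.map_eq]
  refine integral_congr_ae (ae_of_all _ fun θ => ?_)
  have hgaps : π - ∑ i, (Fin.cons (π - ∑ i, θ i) (Fin.tail θ) : Fin (n + 1) → ℝ) i = θ 0 := by
    simp only [Fin.sum_univ_succ, Fin.cons_zero, Fin.cons_succ, Fin.tail]
    ring
  simp only [hgaps, Fin.prod_univ_succ, Fin.cons_zero, Fin.cons_succ, Fin.tail]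
  ring

theorem integral_prod_sin_div_sin_rpow_mul (n : ℕ) (hu : u ∈ Ioo (-(1 / 2)) (1 / 2))
    (hf : Measurable f) :
    ∫ x in {x : Fin (2 * (n + 1)) → ℝ | StrictMono x ∧ ∀ i, 0 < x i ∧ x i < π},
        ∏ i, ((Real.sin (x (evenIndex i)) / Real.sin (x (oddIndex i))) ^ (2 * u) *
          f (x (oddIndex i) - x (evenIndex i))) =
      ∫ θ in openSimplex (n + 1) π,
        gapDensity n u (θ 0) * (∏ i : Fin n, f (θ i.succ)) * f (π - ∑ i, θ i) := by
  rw [← integral_openSimplex_gapDensity_mul_prod n u hf,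
    ← integral_interlacingPairs_arcWeight_mul hu (P := fun θ => ∏ i, f (θ i)) (by fun_prop)
      (prod_comp_cyclicShift f)]
  refine (setIntegral_strictMono_eq_interlacingPairs n π fun q => ∏ i,
    ((Real.sin (q.1 i) / Real.sin (q.2 i)) ^ (2 * u) * f (q.2 i - q.1 i))).trans ?_
  refine setIntegral_congr_fun (measurableSet_interlacingPairs n π) fun q hq => ?_
  simp only [arcWeight_zero_eq_prod_sin_div_sin u hq, Finset.prod_mul_distrib, Pi.sub_apply]

theorem prod_filter_one_le {M : Type*} [CommMonoid M] (g : Fin (n + 1) → M) :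
    ∏ i ∈ Finset.univ.filter (fun i : Fin (n + 1) => 1 ≤ i.val), g i = ∏ i : Fin n, g i.succ := by
  rw [Finset.prod_filter, Fin.prod_univ_succ]
  simp

end Main

theorem stmt_2_general (p : ℕ) (hp : 0 < p) (u : ℝ) (hu : u ∈ Ioo (-(1 / 2) : ℝ) (1 / 2))
    (f : ℝ → ℝ) (hf : Measurable f) :
    (∫ x : Fin (2 * p) → ℝ in {x | StrictMono x ∧ ∀ i, 0 < x i ∧ x i < π},
      ∏ i : Fin p, ((Real.sin (x (evenIndex i)) / Real.sin (x (oddIndex i))) ^ (2 * u) *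
        f (x (oddIndex i) - x (evenIndex i)))) =
    ∫ θ : Fin p → ℝ in {θ | (∀ i, 0 < θ i) ∧ ∑ i, θ i < π},
      (_root_.sinc (2 * u * θ ⟨0, hp⟩) / _root_.sinc (2 * π * u)) *
        ((θ ⟨0, hp⟩) ^ p / (p.factorial : ℝ)) *
        (∏ i ∈ Finset.univ.filter (fun i : Fin p => 1 ≤ i.val), f (θ i)) *
        f (π - ∑ i, θ i) := by
  obtain ⟨n, rfl⟩ := Nat.exists_eq_succ_of_ne_zero hp.ne'
  refine (integral_prod_sin_div_sin_rpow_mul n hu hf).trans ?_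
  simp only [prod_filter_one_le]
  rfl

/-- **Integral identity (Lemma 5.3, first identity).** For `p ≥ 1`, `u ∈ (−1/2,1/2)`
and `f : ℝ → ℝ` continuous,
`Z_p[f] = ∫ (∏ᵢ (sin αᵢ/sin βᵢ)^{2u} f(βᵢ−αᵢ)) dα dβ` over
`{0 < α₁ < β₁ < ⋯ < α_p < β_p < π}` equals
`∫_S (sinc(2uθ₀)/sinc(2πu)) (θ₀^p/p!) ∏_{i=1}^{p−1} f(θᵢ) · f(π−θ₀−⋯−θ_{p−1}) dθ`,
where `S = {θ ∈ ℝ^p : θᵢ > 0, ∑θᵢ < π}`. The interleaved variables are encoded by a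
strictly monotone `x : Fin (2p) → ℝ` with `αᵢ = x(2i)`, `βᵢ = x(2i+1)`. -/
theorem stmt_2 (p : ℕ) (hp : 0 < p) (u : ℝ) (hu : u ∈ Set.Ioo (-(1/2) : ℝ) (1/2))
    (f : ℝ → ℝ) (hf : Continuous f) :
    (∫ x : Fin (2*p) → ℝ in {x | StrictMono x ∧ ∀ i, 0 < x i ∧ x i < π},
      ∏ i : Fin p,
        ((Real.sin (x ⟨2*i.val, by have := i.isLt; omega⟩)
            / Real.sin (x ⟨2*i.val+1, by have := i.isLt; omega⟩)) ^ (2*u)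
          * f (x ⟨2*i.val+1, by have := i.isLt; omega⟩ - x ⟨2*i.val, by have := i.isLt; omega⟩)))
    = ∫ θ : Fin p → ℝ in {θ | (∀ i, 0 < θ i) ∧ ∑ i, θ i < π},
        (_root_.sinc (2*u*θ ⟨0, hp⟩) / _root_.sinc (2*π*u)) * ((θ ⟨0, hp⟩)^p / (p.factorial : ℝ))
          * (∏ i ∈ Finset.univ.filter (fun i : Fin p => 1 ≤ i.val), f (θ i))
          * f (π - ∑ i, θ i) :=
  stmt_2_general p hp u hu f hf.measurable
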